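/- arXiv:2111.04166 — 3 statements merged into one kernel-verified Lean document; each statement's English description precedes it below -/
import Mathlib

section
/- Let F_q have odd characteristic and let R(x) = g(x)/h(x) be a cubic rational expression over F_q (g, h coprime, max(deg g, deg h) = 3) having four distinct ramification points over the algebraic closure of F_q; equivalently, the polynomial g'(x)h(x) − g(x)h'(x) has no repeated roots and has degree 4, or has no repeated roots and degree 3 (in which case ∞ is the fourth ramification point). Then there exists a constant C, depending only on g, h and q, such that for every integer n > 1, | |𝓘(g, h, n, q)| − q^n/(3n) | ≤ C · q^{n/2}/n. -/
open Polynomial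

/-- The transform `f_R` of a nonzero polynomial `f` by the rational expression `R = g/h`. -/
noncomputable def ratTransform {K : Type*} [Field K] (g h f : K[X]) : K[X] :=
  ∑ i ∈ Finset.range (f.natDegree + 1), C (f.coeff i) * g ^ i * h ^ (f.natDegree - i)

/-- `𝓘(g,h,n,q)`: the set of monic irreducible polynomials `f` of degree `n` over the field
such that `f_R` is irreducible. -/
noncomputable def IrredSet {K : Type*} [Field K] (g h : K[X]) (n : ℕ) : Set K[X] :=
  {f | f.Monic ∧ Irreducible f ∧ f.natDegree = n ∧ Irreducible (ratTransform g h f)}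

theorem aux_expand {F : Type*} [Field F] [Fintype F] (t : ℕ) (f : F[X]) :
    expand F (Fintype.card F ^ t) f = f ^ (Fintype.card F ^ t) := by
  induction t with
  | zero => simp
  | succ t ih =>
    rw [pow_succ, mul_comm, ← expand_expand, ih, map_pow, FiniteField.expand_card, ← pow_mul]

theorem aux_block {F : Type*} [Field F] (M : ℕ) (H : F[X][X])
    (hd : ∀ i, (H.coeff i).natDegree < M) (h0 : H.eval (X ^ M) = 0) : H = 0 := by
  by_contra hne
  have h1 := eval_eq_sum_range (p := H) (X ^ M : F[X])
  rw [h0, Finset.sum_range_succ] at h1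
  have hN : H.coeff H.natDegree ≠ 0 := leadingCoeff_ne_zero.mpr hne
  have hlt : (∑ x ∈ Finset.range H.natDegree, H.coeff x * (X ^ M : F[X]) ^ x).degree <
      (H.coeff H.natDegree * (X ^ M : F[X]) ^ H.natDegree).degree := by
    have hM : 0 < M := lt_of_le_of_lt (Nat.zero_le _) (hd 0)
    have h2 : ((H.natDegree * M : ℕ) : WithBot ℕ) ≤ (H.coeff H.natDegree * (X ^ M : F[X]) ^ H.natDegree).degree := by
      rw [degree_eq_natDegree (mul_ne_zero hN (by simp)), natDegree_mul hN (by simp), ← pow_mul,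
        natDegree_X_pow]
      norm_cast
      nlinarith
    refine lt_of_lt_of_le ?_ h2
    rw [← mem_degreeLT]
    refine Submodule.sum_mem _ fun x hx => ?_
    rw [mem_degreeLT]
    refine lt_of_le_of_lt degree_le_natDegree ?_
    norm_cast
    refine lt_of_le_of_lt natDegree_mul_le ?_
    rw [← pow_mul, natDegree_X_pow]
    have := hd x
    have h3 : x + 1 ≤ H.natDegree := Finset.mem_range.mp hx
    nlinarith
  have h2 := degree_add_eq_right_of_degree_lt hlt
  rw [← h1, degree_zero, eq_comm, degree_eq_bot] at h2
  exact mul_ne_zero hN (by simp) h2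

theorem aux_nonvanish {F : Type*} [Field F] [Fintype F] (f : F[X]) 
    (hf4 : f.natDegree ≤ 4)
    (hf : ∀ c : F, c ≠ 0 → ∀ r : F[X], C c * f ≠ r ^ 2) (t k : ℕ)
    (hodd : Odd (Fintype.card F ^ t))
    (hk : 2 * k + 4 < Fintype.card F ^ t)
    (H0 H1 : F[X][X]) (hd0 : ∀ i, (H0.coeff i).natDegree ≤ k) (hd1 : ∀ i, (H1.coeff i).natDegree ≤ k)
    (h : H0.eval (X ^ (Fintype.card F ^ t)) + H1.eval (X ^ (Fintype.card F ^ t)) *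
      f ^ ((Fintype.card F ^ t + 1) / 2) = 0) : H0 = 0 ∧ H1 = 0 := by
  set M := Fintype.card F ^ t with hM
  have hf0 : f ≠ 0 := by
    intro h0
    exact hf 1 one_ne_zero 0 (by simp [h0])
  have hfM : (f.map C).eval (X ^ M) = f ^ M := by
    rw [hM, ← aux_expand t f, expand_eq_comp_X_pow, eval_map, comp]
  have hE : H0 ^ 2 - C f * f.map C * H1 ^ 2 = 0 := by
    apply aux_block M
    · intro i
      have h1 : ∀ H : F[X][X], (∀ i, (H.coeff i).natDegree ≤ k) → 
          ∀ i, ((H ^ 2).coeff i).natDegree ≤ 2 * k := by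
        intro H hH i
        rw [pow_two, coeff_mul]
        refine natDegree_sum_le_of_forall_le _ _ fun x _ => ?_
        refine natDegree_mul_le.trans ?_
        have := hH x.1
        have := hH x.2
        omega
      refine lt_of_le_of_lt (?_ : _ ≤ 2 * k + 4) hk
      rw [coeff_sub]
      refine (natDegree_sub_le _ _).trans (max_le ((h1 _ hd0 i).trans (by omega)) ?_)
      rw [mul_assoc, coeff_C_mul, coeff_mul]
      refine natDegree_mul_le.trans ?_
      have : (∑ x ∈ Finset.HasAntidiagonal.antidiagonal i, (f.map C).coeff x.1 * (H1 ^ 2).coeff x.2).natDegree ≤ 2 * k := by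
        refine natDegree_sum_le_of_forall_le _ _ fun x _ => ?_
        rw [coeff_map]
        exact (natDegree_C_mul_le _ _).trans (h1 _ hd1 _)
      omega
    · simp only [eval_sub, eval_mul, eval_pow, eval_C, hfM]
      have h2 : H0.eval (X ^ M) = - (H1.eval (X ^ M) * f ^ ((M + 1) / 2)) := eq_neg_of_add_eq_zero_left h
      rw [h2]
      have : f * f ^ M = (f ^ ((M + 1) / 2)) ^ 2 := by
        rw [← pow_succ', ← pow_mul]
        congr 1
        obtain ⟨j, hj⟩ := hodd
        omega
      rw [this]
      ring
  have hH1 : H1 = 0 := by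
    by_contra hne
    have h3 : H0 ^ 2 = C f * f.map C * H1 ^ 2 := sub_eq_zero.mp hE
    have h4 := congrArg leadingCoeff h3
    rw [leadingCoeff_pow, leadingCoeff_mul, leadingCoeff_mul, leadingCoeff_pow, leadingCoeff_C,
      leadingCoeff_map_of_injective (C_injective)] at h4
    have h5 : H1.leadingCoeff ≠ 0 := leadingCoeff_ne_zero.mpr hne
    have h6 : H1.leadingCoeff ^ 2 ∣ H0.leadingCoeff ^ 2 := ⟨_, h4.trans (mul_comm _ _)⟩
    have h7 : H1.leadingCoeff ∣ H0.leadingCoeff := by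
      rwa [IsIntegrallyClosed.pow_dvd_pow_iff (by norm_num)] at h6
    obtain ⟨r, hr⟩ := h7
    refine hf f.leadingCoeff (leadingCoeff_ne_zero.mpr hf0) r ?_
    rw [hr] at h4
    apply mul_right_cancel₀ (pow_ne_zero 2 h5)
    linear_combination -h4
  refine ⟨?_, hH1⟩
  rw [hH1] at hE
  simpa using hE

theorem aux_exists {F : Type*} [Field F] (a : F) (f : F[X]) (hf4 : f.natDegree ≤ 4) (P k m e : ℕ)
    (he : 4 * e ≤ 2 * P + 2) (hdim : (k + 2) * P + m + 2 < 2 * ((k + 1) * m)) :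
    ∃ α β : Fin m → F[X], (∀ i, (α i).natDegree ≤ k) ∧ (∀ i, (β i).natDegree ≤ k) ∧
      ((∃ i, α i ≠ 0) ∨ (∃ i, β i ≠ 0)) ∧
      ∑ i : Fin m, X ^ (i : ℕ) * (expand F P (α i) + C a * expand F P (β i) * f ^ e) = 0 := by
  classical
  have : Module.Finite F (degreeLT F (k + 1)) := Module.Finite.equiv (degreeLTEquiv F (k + 1)).symm
  obtain ⟨Φ, hΦdef⟩ : ∃ Φ : ((Fin m → degreeLT F (k + 1)) × (Fin m → degreeLT F (k + 1))) →ₗ[F] F[X],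
      ∀ v, Φ v = ∑ i : Fin m, X ^ (i : ℕ) * (expand F P (v.1 i : F[X]) +
        C a * expand F P (v.2 i : F[X]) * f ^ e) := by
    refine ⟨{ toFun := fun v => ∑ i : Fin m, X ^ (i : ℕ) * (expand F P (v.1 i : F[X]) +
        C a * expand F P (v.2 i : F[X]) * f ^ e), map_add' := ?_, map_smul' := ?_ }, fun v => rfl⟩
    · intro v w
      rw [← Finset.sum_add_distrib]
      refine Finset.sum_congr rfl fun i _ => ?_
      simp only [Prod.fst_add, Prod.snd_add, Pi.add_apply, Submodule.coe_add, map_add]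
      ring
    · intro c v
      rw [RingHom.id_apply, Finset.smul_sum]
      refine Finset.sum_congr rfl fun i _ => ?_
      simp only [Prod.smul_fst, Prod.smul_snd, Pi.smul_apply, Submodule.coe_smul, smul_eq_C_mul, map_mul, expand_C]
      ring
  obtain ⟨N, hNdef⟩ : ∃ N, N = (k + 2) * P + m + 2 := ⟨_, rfl⟩
  let Ψ : ((Fin m → degreeLT F (k + 1)) × (Fin m → degreeLT F (k + 1))) →ₗ[F] (Fin N → F) := LinearMap.pi (fun j : Fin N => (lcoeff F (j : ℕ)).comp Φ)
  have hfr : Module.finrank F ((Fin m → degreeLT F (k + 1)) × (Fin m → degreeLT F (k + 1))) = 2 * ((k + 1) * m) := by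
    rw [Module.finrank_prod, Module.finrank_pi_fintype, (degreeLTEquiv F (k + 1)).finrank_eq]
    simp
    ring
  have hker : LinearMap.ker Ψ ≠ ⊥ := by
    apply LinearMap.ker_ne_bot_of_finrank_lt
    rw [hfr]
    simpa [hNdef] using hdim
  obtain ⟨v, hv, hv0⟩ := (Submodule.ne_bot_iff _).mp hker
  have hdeg : ∀ p : degreeLT F (k + 1), (p : F[X]).natDegree ≤ k := by
    intro p
    have := mem_degreeLT.mp p.2
    by_cases h0 : (p : F[X]) = 0
    · simp [h0]
    · rw [degree_eq_natDegree h0] at this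
      norm_cast at this
      omega
  refine ⟨fun i => v.1 i, fun i => v.2 i, fun i => hdeg _, fun i => hdeg _, ?_, ?_⟩
  · by_contra hcon
    push Not at hcon
    apply hv0
    ext i : 3
    · simpa using hcon.1 i
    · simpa using hcon.2 i
  · have hΦ : Φ v = 0 := by
      have hN : (Φ v).natDegree < N := by
        rw [hΦdef]
        refine lt_of_le_of_lt (natDegree_sum_le_of_forall_le (n := (k + 2) * P + m + 1) _ _ ?_) (by omega)
        intro i _
        refine natDegree_mul_le.trans ?_
        rw [natDegree_X_pow]
        have h1 : (expand F P (v.1 i : F[X]) + C a * expand F P (v.2 i : F[X]) * f ^ e).natDegree ≤ 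
            (k + 2) * P + 2 := by
          refine (natDegree_add_le _ _).trans (max_le ?_ ?_)
          · rw [natDegree_expand]
            have := hdeg (v.1 i)
            nlinarith
          · refine natDegree_mul_le.trans ?_
            have h2 : (f ^ e).natDegree ≤ e * 4 := natDegree_pow_le.trans (Nat.mul_le_mul_left _ hf4)
            have h3 : (C a * expand F P (v.2 i : F[X])).natDegree ≤ k * P := by
              refine (natDegree_C_mul_le _ _).trans ?_
              rw [natDegree_expand]
              exact Nat.mul_le_mul_right _ (hdeg _)
            nlinarith
        have := i.2
        omega
      ext j
      rw [coeff_zero]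
      by_cases hj : j < N
      · have := congrFun (LinearMap.mem_ker.mp hv) ⟨j, hj⟩
        simpa [Ψ] using this
      · exact coeff_eq_zero_of_natDegree_lt (by omega)
    rw [← hΦ, hΦdef]

theorem aux_stepanov {F : Type*} [Field F] [Fintype F] (f : F[X]) (hf4 : f.natDegree ≤ 4)
    (hf : ∀ c : F, c ≠ 0 → ∀ r : F[X], C c * f ≠ r ^ 2) 
    (hodd : Odd (Fintype.card F)) (h3 : 3 ≤ Fintype.card F)
    (s t : ℕ) (hs : 1 ≤ s) (hst : s + 2 ≤ t) 
    {K : Type*} [Field K] [Fintype K] [Algebra F K] (hK : Fintype.card K = Fintype.card F ^ (s + t))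
    (a : F) (S : Finset K)
    (hS : ∀ x ∈ S, (aeval x f) ^ ((Fintype.card K - 1) / 2) = algebraMap F K a) :
    2 * S.card ≤ Fintype.card K + 10 * Fintype.card F ^ t := by
  classical
  set q := Fintype.card F with hq
  set P := q ^ s with hP
  set M := q ^ t with hM
  have hPo : Odd P := hodd.pow
  have hMo : Odd M := hodd.pow
  have hP3 : 3 ≤ P := h3.trans (Nat.le_self_pow (by omega) q)
  have hPM : 9 * P ≤ M := by
    have h1 : q ^ (s + 2) ≤ q ^ t := Nat.pow_le_pow_right (by omega) hst
    have h2 : 9 ≤ q ^ 2 := by nlinarith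
    rw [pow_add] at h1
    nlinarith [Nat.zero_le P]
  have hQ : Fintype.card K = P * M := by rw [hK, pow_add]
  obtain ⟨u, hu⟩ := hPo
  obtain ⟨v, hv⟩ := hMo
  obtain ⟨α, β, hα, hβ, hne, hsum⟩ := aux_exists a f hf4 P (2 * P + 1) (u + 1) ((P + 1) / 2) (by omega)
    (by rw [hu]; nlinarith)
  set w : F[X] := ∑ i : Fin (u + 1), X ^ ((i : ℕ) * M) * (α i + β i * f ^ ((M + 1) / 2)) with hw
  have hw0 : w ≠ 0 := by
    intro h0
    let H : (Fin (u + 1) → F[X]) → F[X][X] := fun γ => ∑ i : Fin (u + 1), C (γ i) * X ^ (i : ℕ)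
    have hHc : ∀ γ (i : Fin (u + 1)), (H γ).coeff i = γ i := by
      intro γ i
      simp only [H, finsetSum_coeff, coeff_C_mul, coeff_X_pow]
      rw [Finset.sum_eq_single i]
      · simp
      · intro b _ hb
        rw [if_neg, mul_zero]
        intro h; exact hb (Fin.ext h.symm)
      · simp
    have hHd : ∀ γ, (∀ i, (γ i).natDegree ≤ 2 * P + 1) → ∀ i, ((H γ).coeff i).natDegree ≤ 2 * P + 1 := by
      intro γ hγ i
      simp only [H, finsetSum_coeff, coeff_C_mul, coeff_X_pow]
      refine natDegree_sum_le_of_forall_le _ _ fun j _ => ?_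
      split_ifs
      · simpa using hγ j
      · simp
    have hHe : ∀ γ, (H γ).eval (X ^ M) = ∑ i : Fin (u + 1), γ i * X ^ ((i : ℕ) * M) := by
      intro γ
      simp only [H, eval_finsetSum, eval_mul, eval_C, eval_pow, eval_X, ← pow_mul, mul_comm M]
    have := aux_nonvanish f hf4 hf t (2 * P + 1) hodd.pow (by rw [← hq, ← hM]; omega) (H α) (H β) (hHd α hα) (hHd β hβ) (by
      rw [← hq, ← hM, hHe, hHe, Finset.sum_mul, ← Finset.sum_add_distrib, ← h0, hw]
      refine Finset.sum_congr rfl fun i _ => ?_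
      ring)
    rcases hne with ⟨i, hi⟩ | ⟨i, hi⟩
    · apply hi; rw [← hHc α i, this.1, coeff_zero]
    · apply hi; rw [← hHc β i, this.2, coeff_zero]
  have hdeg : w.natDegree ≤ 2 * P + 1 + u * M + 2 * (M + 1) := by
    refine natDegree_sum_le_of_forall_le _ _ fun i _ => ?_
    refine natDegree_mul_le.trans ?_
    rw [natDegree_X_pow]
    have h1 : (α i + β i * f ^ ((M + 1) / 2)).natDegree ≤ 2 * P + 1 + 2 * (M + 1) := by
      refine (natDegree_add_le _ _).trans (max_le ((hα i).trans (by omega)) ?_)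
      refine natDegree_mul_le.trans ?_
      have h2 : (f ^ ((M + 1) / 2)).natDegree ≤ ((M + 1) / 2) * 4 := natDegree_pow_le.trans (Nat.mul_le_mul_left _ hf4)
      have := hβ i
      omega
    have h2 : (i : ℕ) * M ≤ u * M := Nat.mul_le_mul_right _ (by omega)
    omega
  have hroot : ∀ x ∈ S, aeval x w = 0 := by
    intro x hx
    have h1 : (aeval x w) ^ P = 0 := by
      rw [← map_pow, hP, ← aux_expand, ← hq, ← hP, hw]
      rw [map_sum, map_sum]
      have h2 := congrArg (aeval x) hsum
      rw [map_sum, map_zero] at h2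
      rw [← h2]
      refine Finset.sum_congr rfl fun i _ => ?_
      have hxQ : x ^ (P * ((i : ℕ) * M)) = x ^ (i : ℕ) := by
        rw [show P * ((i : ℕ) * M) = Fintype.card K * i by rw [hQ]; ring, pow_mul, FiniteField.pow_card]
      have hfx : (aeval x f) ^ (P * ((M + 1) / 2)) = algebraMap F K a * (aeval x f) ^ ((P + 1) / 2) := by
        rw [← hS x hx, ← pow_add]
        congr 1
        have e1 : (M + 1) / 2 = v + 1 := by omega
        have e2 : (P + 1) / 2 = u + 1 := by omega
        have e3 : (Fintype.card K - 1) / 2 = P * v + u := by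
          rw [hQ, hv, Nat.mul_add, mul_one]
          have : P * (2 * v) = 2 * (P * v) := by ring
          omega
        rw [e1, e2, e3, Nat.mul_add]
        omega
      simp only [map_mul, map_add, map_pow, expand_X, aeval_X, aeval_C]
      have hef : expand F P f = f ^ P := aux_expand s f
      rw [hef, ← pow_mul, hxQ, map_pow, ← pow_mul, hfx]
      ring
    exact pow_eq_zero_iff (by omega) |>.mp h1
  have hcard : S.card ≤ w.natDegree := by
    have hmap : w.map (algebraMap F K) ≠ 0 := (Polynomial.map_ne_zero_iff (algebraMap F K).injective).mpr hw0
    rw [← natDegree_map (algebraMap F K)]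
    refine card_le_degree_of_subset_roots (p := w.map (algebraMap F K)) ?_
    intro x hx
    rw [mem_roots hmap, IsRoot, eval_map_algebraMap]
    exact hroot x hx
  rw [hQ]
  have : P * M = 2 * (u * M) + M := by rw [hu]; ring
  omega

theorem aux_charsum {F : Type*} [Field F] [Fintype F] (f : F[X]) (hf4 : f.natDegree ≤ 4)
    (hf : ∀ c : F, c ≠ 0 → ∀ r : F[X], C c * f ≠ r ^ 2)
    (hodd : Odd (Fintype.card F)) (h3 : 3 ≤ Fintype.card F)
    (s t : ℕ) (hs : 1 ≤ s) (hst : s + 2 ≤ t)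
    {K : Type*} [Field K] [Fintype K] [DecidableEq K] [Algebra F K]
    (hK : Fintype.card K = Fintype.card F ^ (s + t)) :
    |∑ x : K, quadraticChar K (aeval x f)| ≤ 10 * (Fintype.card F : ℤ) ^ t + 4 := by
  classical
  have hf0 : f ≠ 0 := by
    intro h0
    exact hf 1 one_ne_zero 0 (by simp [h0])
  have hKodd : Odd (Fintype.card K) := by rw [hK]; exact hodd.pow
  have hchar : ringChar K ≠ 2 := by
    intro h2
    have := FiniteField.even_card_of_char_two h2
    rw [Nat.odd_iff] at hKodd
    omega
  have hhalf : (Fintype.card K - 1) / 2 = Fintype.card K / 2 := by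
    obtain ⟨j, hj⟩ := hKodd
    omega
  set χ := quadraticChar K with hχ
  have key : ∀ x : K, (χ (aeval x f) : K) = (aeval x f) ^ ((Fintype.card K - 1) / 2) := by
    intro x
    rw [hhalf]
    exact quadraticChar_eq_pow_of_char_ne_two' hchar _
  set S1 : Finset K := Finset.univ.filter fun x => χ (aeval x f) = 1 with hS1
  set S2 : Finset K := Finset.univ.filter fun x => χ (aeval x f) = -1 with hS2
  set S0 : Finset K := Finset.univ.filter fun x => χ (aeval x f) = 0 with hS0
  have b1 := aux_stepanov f hf4 hf hodd h3 s t hs hst hK 1 S1 (by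
    intro x hx
    rw [← key, (Finset.mem_filter.mp hx).2]; simp)
  have b2 := aux_stepanov f hf4 hf hodd h3 s t hs hst hK (-1) S2 (by
    intro x hx
    rw [← key, (Finset.mem_filter.mp hx).2]; simp)
  have b0 : S0.card ≤ 4 := by
    have hmap : f.map (algebraMap F K) ≠ 0 := (Polynomial.map_ne_zero_iff (algebraMap F K).injective).mpr hf0
    refine le_trans ?_ hf4
    rw [← natDegree_map (algebraMap F K)]
    refine card_le_degree_of_subset_roots (p := f.map (algebraMap F K)) ?_
    intro x hx
    rw [mem_roots hmap, IsRoot, eval_map_algebraMap]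
    exact quadraticChar_eq_zero_iff.mp (Finset.mem_filter.mp hx).2
  have tri : ∀ y : K, χ y = 0 ∨ χ y = 1 ∨ χ y = -1 := by
    intro y
    by_cases hy : y = 0
    · left; exact quadraticChar_eq_zero_iff.mpr hy
    · right; exact quadraticChar_dichotomy hy
  have hsum : ∑ x : K, χ (aeval x f) = (S1.card : ℤ) - S2.card := by
    rw [hS1, hS2, Finset.card_filter, Finset.card_filter]
    push_cast
    rw [← Finset.sum_sub_distrib]
    refine Finset.sum_congr rfl fun x _ => ?_
    rcases tri (aeval x f) with h | h | h <;> rw [h] <;> norm_num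
  have htot : Fintype.card K = S0.card + S1.card + S2.card := by
    rw [hS1, hS2, hS0, Finset.card_filter, Finset.card_filter, Finset.card_filter, ← Finset.sum_add_distrib,
      ← Finset.sum_add_distrib, ← Finset.card_univ, Finset.card_eq_sum_ones]
    refine Finset.sum_congr rfl fun x _ => ?_
    rcases tri (aeval x f) with h | h | h <;> rw [h] <;> norm_num
  rw [hsum, abs_le]
  have : ((Fintype.card F ^ t : ℕ) : ℤ) = (Fintype.card F : ℤ) ^ t := by push_cast; ring
  rw [← this]
  constructor <;> omega

/-- Discriminant in `y` of `(g(x)h(y)-g(y)h(x))/(x-y)` for cubic `g,h`. -/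
noncomputable def auxA {K : Type*} [Field K] (g h : K[X]) : K[X] :=
  C (g.coeff 3 * h.coeff 0 - g.coeff 0 * h.coeff 3) + C (g.coeff 3 * h.coeff 1 - g.coeff 1 * h.coeff 3) * X
    + C (g.coeff 3 * h.coeff 2 - g.coeff 2 * h.coeff 3) * X ^ 2

noncomputable def auxB {K : Type*} [Field K] (g h : K[X]) : K[X] :=
  C (g.coeff 2 * h.coeff 0 - g.coeff 0 * h.coeff 2) + 
    C (g.coeff 3 * h.coeff 0 - g.coeff 0 * h.coeff 3 + (g.coeff 2 * h.coeff 1 - g.coeff 1 * h.coeff 2)) * X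
    + C (g.coeff 3 * h.coeff 1 - g.coeff 1 * h.coeff 3) * X ^ 2

noncomputable def auxC {K : Type*} [Field K] (g h : K[X]) : K[X] :=
  C (g.coeff 1 * h.coeff 0 - g.coeff 0 * h.coeff 1) + C (g.coeff 2 * h.coeff 0 - g.coeff 0 * h.coeff 2) * X
    + C (g.coeff 3 * h.coeff 0 - g.coeff 0 * h.coeff 3) * X ^ 2

noncomputable def auxD {K : Type*} [Field K] (g h : K[X]) : K[X] :=
  auxB g h ^ 2 - 4 * auxA g h * auxC g h

theorem auxD_map {K L : Type*} [Field K] [Field L] (φ : K →+* L) (g h : K[X]) :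
    (auxD g h).map φ = auxD (g.map φ) (h.map φ) := by
  simp [auxD, auxA, auxB, auxC]

theorem auxA_deg {K : Type*} [Field K] (g h : K[X]) : (auxA g h).natDegree ≤ 2 := by
  unfold auxA; compute_degree
theorem auxB_deg {K : Type*} [Field K] (g h : K[X]) : (auxB g h).natDegree ≤ 2 := by
  unfold auxB; compute_degree
theorem auxC_deg {K : Type*} [Field K] (g h : K[X]) : (auxC g h).natDegree ≤ 2 := by
  unfold auxC; compute_degree

theorem auxD_deg {K : Type*} [Field K] (g h : K[X]) : (auxD g h).natDegree ≤ 4 := by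
  unfold auxD auxA auxB auxC; compute_degree

theorem auxD_coeff {K : Type*} [Field K] (g h : K[X]) : (auxD g h).coeff 4 = 
    (g.coeff 3 * h.coeff 1 - g.coeff 1 * h.coeff 3) ^ 2 - 4 * (g.coeff 3 * h.coeff 2 - g.coeff 2 * h.coeff 3)
     * (g.coeff 3 * h.coeff 0 - g.coeff 0 * h.coeff 3) := by
  unfold auxD auxA auxB auxC; compute_degree
  all_goals norm_num

theorem aux_cubic {K : Type*} [Field K] (g : K[X]) (hg : g.natDegree ≤ 3) :
    g = C (g.coeff 0) + C (g.coeff 1) * X + C (g.coeff 2) * X ^ 2 + C (g.coeff 3) * X ^ 3 := by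
  conv_lhs => rw [as_sum_range_C_mul_X_pow' g (show g.natDegree < 4 by omega)]
  simp [Finset.sum_range_succ]

theorem aux_W {K : Type*} [Field K] (g h : K[X]) (hg : g.natDegree ≤ 3) (hh : h.natDegree ≤ 3) :
    derivative g * h - g * derivative h = auxA g h * X ^ 2 + auxB g h * X + auxC g h := by
  unfold auxA auxB auxC
  have e1 := aux_cubic g hg
  have e2 := aux_cubic h hh
  generalize g.coeff 0 = g0 at *
  generalize g.coeff 1 = g1 at *
  generalize g.coeff 2 = g2 at *
  generalize g.coeff 3 = g3 at *
  generalize h.coeff 0 = h0 at *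
  generalize h.coeff 1 = h1 at *
  generalize h.coeff 2 = h2 at *
  generalize h.coeff 3 = h3 at *
  rw [e1, e2]
  simp only [map_add, map_sub, map_mul, derivative_mul, derivative_C, derivative_X, derivative_X_pow]
  simp only [show (C ((2 : ℕ) : K) : K[X]) = 2 from map_ofNat C 2, show (C ((3 : ℕ) : K) : K[X]) = 3 from map_ofNat C 3]
  ring

theorem auxA_eval {K : Type*} [Field K] (g h : K[X]) (hg : g.natDegree ≤ 3) (hh : h.natDegree ≤ 3) (x : K) :
    (auxA g h).eval x = g.coeff 3 * h.eval x - h.coeff 3 * g.eval x := by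
  rw [aux_cubic g hg, aux_cubic h hh]
  simp [auxA]
  ring
theorem auxB_eval {K : Type*} [Field K] (g h : K[X]) (hg : g.natDegree ≤ 3) (hh : h.natDegree ≤ 3) (x : K) :
    (auxB g h).eval x = x * (auxA g h).eval x + g.coeff 2 * h.eval x - h.coeff 2 * g.eval x := by
  rw [aux_cubic g hg, aux_cubic h hh]
  simp [auxA, auxB]
  ring
theorem auxC_eval {K : Type*} [Field K] (g h : K[X]) (hg : g.natDegree ≤ 3) (hh : h.natDegree ≤ 3) (x : K) :
    (auxC g h).eval x = x * (auxB g h).eval x + g.coeff 1 * h.eval x - h.coeff 1 * g.eval x := by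
  rw [aux_cubic g hg, aux_cubic h hh]
  simp [auxC, auxB]
  ring
theorem auxD_eval {K : Type*} [Field K] (g h : K[X]) (x : K) :
    (auxD g h).eval x = (auxB g h).eval x ^ 2 - 4 * (auxA g h).eval x * (auxC g h).eval x := by
  simp [auxD]
theorem auxG {K : Type*} [Field K] (g h : K[X]) (hg : g.natDegree ≤ 3) (hh : h.natDegree ≤ 3) (x y : K) :
    ((auxA g h).eval x * y ^ 2 + (auxB g h).eval x * y + (auxC g h).eval x) * (x - y) = 
      g.eval x * h.eval y - g.eval y * h.eval x := by
  rw [aux_cubic g hg, aux_cubic h hh]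
  simp [auxC, auxB, auxA]
  ring


theorem aux_prop {K : Type*} [Field K] {a b c d : K} (hab : a ≠ 0 ∨ b ≠ 0) (h : a * c = b * d) :
    ∃ l, c = l * b ∧ d = l * a := by
  by_cases ha : a = 0
  · have hb : b ≠ 0 := by tauto
    refine ⟨c / b, by field_simp, ?_⟩
    subst ha
    rw [zero_mul, eq_comm, mul_eq_zero] at h
    simp [h.resolve_left hb]
  · exact ⟨d / a, by field_simp; linear_combination h, by field_simp⟩

theorem aux_Wzero {K : Type*} [Field K] {g h : K[X]} {a b : K} (hab : a ≠ 0 ∨ b ≠ 0) (he : C a * g = C b * h) :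
    derivative g * h - g * derivative h = 0 := by
  have hd := congrArg derivative he
  simp only [derivative_C_mul] at hd
  rcases hab with h1 | h1
  · have : C a * (derivative g * h - g * derivative h) = 0 := by
      linear_combination h * hd - derivative h * he
    rcases mul_eq_zero.mp this with h2 | h2
    · exact absurd (C_eq_zero.mp h2) h1
    · exact h2
  · have : C b * (derivative g * h - g * derivative h) = 0 := by
      linear_combination  g * hd - derivative g * he
    rcases mul_eq_zero.mp this with h2 | h2
    · exact absurd (C_eq_zero.mp h2) h1
    · exact h2

theorem aux_double {K : Type*} [Field K] (g h : K[X]) (hg : g.natDegree ≤ 3) (hh : h.natDegree ≤ 3) (P : K)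
    (hP : (derivative g * h - g * derivative h).eval P = 0) (d : ℕ → K)
    (hd : ∀ i, d i = h.eval P * g.coeff i - g.eval P * h.coeff i) :
    d 1 = P ^ 2 * d 3 - 2 * P * (d 2 + 2 * P * d 3) ∧ d 0 = P ^ 2 * (d 2 + 2 * P * d 3) := by
  have h1 : d 1 + 2 * d 2 * P + 3 * d 3 * P ^ 2 = 0 := by
    rw [← hP, hd, hd, hd]
    have e1 : (derivative g).eval P = g.coeff 1 + 2 * g.coeff 2 * P + 3 * g.coeff 3 * P ^ 2 := by
      conv_lhs => rw [aux_cubic g hg]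
      simp; ring
    have e2 : (derivative h).eval P = h.coeff 1 + 2 * h.coeff 2 * P + 3 * h.coeff 3 * P ^ 2 := by
      conv_lhs => rw [aux_cubic h hh]
      simp; ring
    rw [eval_sub, eval_mul, eval_mul, e1, e2]
    ring
  have h0 : d 0 + d 1 * P + d 2 * P ^ 2 + d 3 * P ^ 3 = 0 := by
    rw [hd, hd, hd, hd]
    have e1 : g.eval P = g.coeff 0 + g.coeff 1 * P + g.coeff 2 * P ^ 2 + g.coeff 3 * P ^ 3 := by
      conv_lhs => rw [aux_cubic g hg]
      simp
    have e2 : h.eval P = h.coeff 0 + h.coeff 1 * P + h.coeff 2 * P ^ 2 + h.coeff 3 * P ^ 3 := by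
      conv_lhs => rw [aux_cubic h hh]
      simp
    linear_combination g.eval P * e2 - h.eval P * e1
  constructor
  · linear_combination h1
  · linear_combination h0 - P * h1

theorem aux_coprime {K : Type*} [Field K] {g h : K[X]} (hc : IsCoprime g h) (P : K) : h.eval P ≠ 0 ∨ g.eval P ≠ 0 := by
  by_contra hcon
  push Not at hcon
  obtain ⟨s, t, hst⟩ := hc
  have := congrArg (eval P) hst
  simp [hcon.1, hcon.2] at this

theorem aux_inj {K : Type*} [Field K] (g h : K[X]) (hg : g.natDegree ≤ 3) (hh : h.natDegree ≤ 3)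
    (hc : IsCoprime g h) (hW : derivative g * h - g * derivative h ≠ 0) (P Q : K) (hPQ : P ≠ Q)
    (hP : (derivative g * h - g * derivative h).eval P = 0)
    (hQ : (derivative g * h - g * derivative h).eval Q = 0) : h.eval P * g.eval Q ≠ g.eval P * h.eval Q := by
  intro heq
  obtain ⟨d1, d0⟩ := aux_double g h hg hh P hP _ (fun i => rfl)
  have hdef : C (h.eval P) * g - C (g.eval P) * h = (X - C P) ^ 2 * 
     (C (h.eval P * g.coeff 3 - g.eval P * h.coeff 3) * X + 
      C ((h.eval P * g.coeff 2 - g.eval P * h.coeff 2) + 2 * P * (h.eval P * g.coeff 3 - g.eval P * h.coeff 3))) := by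
    have e0 := congrArg C d0
    have e1 := congrArg C d1
    generalize h.eval P = a at *
    generalize g.eval P = b at *
    conv_lhs => rw [aux_cubic g hg, aux_cubic h hh]
    simp only [map_sub, map_mul, map_add, map_pow] at e0 e1 ⊢
    have c2 : (C (2 : K) : K[X]) = 2 := map_ofNat C 2
    rw [c2] at e0 e1 ⊢
    linear_combination e0 + X * e1
  obtain ⟨l, hl1, hl2⟩ := aux_prop (aux_coprime hc P) heq
  set u := h.eval P * g.coeff 3 - g.eval P * h.coeff 3 with hu
  set v := (h.eval P * g.coeff 2 - g.eval P * h.coeff 2) + 2 * P * u with hv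
  have hl0 : l ≠ 0 := by
    rintro rfl
    have := aux_coprime hc Q
    simp [hl1, hl2] at this
  have q0 : u * Q + v = 0 := by
    have := congrArg (eval Q) hdef
    simp only [eval_sub, eval_mul, eval_C, eval_pow, eval_add, eval_X] at this
    have h2 : (Q - P) ^ 2 * (u * Q + v) = 0 := by rw [← this, heq]; ring
    exact (mul_eq_zero.mp h2).resolve_left (pow_ne_zero _ (sub_ne_zero.mpr hPQ.symm))
  have q1 : u = 0 := by
    have := congrArg (eval Q) (congrArg derivative hdef)
    simp only [derivative_sub, derivative_mul, derivative_C, derivative_add, derivative_X, derivative_pow, eval_sub, eval_mul, eval_C, eval_pow, eval_add, eval_X, eval_zero, eval_one] at this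
    simp only [eval_sub, eval_mul, hl1, hl2] at hQ
    have h3 : (Q - P) ^ 2 * u = 0 := by
      apply mul_left_cancel₀ hl0
      rw [mul_zero, ← hQ]
      linear_combination (-l) * this - l * 2 * (Q - P) * q0
    exact (mul_eq_zero.mp h3).resolve_left (pow_ne_zero _ (sub_ne_zero.mpr hPQ.symm))
  have q2 : v = 0 := by simpa [q1] using q0
  apply hW
  apply aux_Wzero (aux_coprime hc P)
  rw [q1, q2] at hdef
  rw [← sub_eq_zero, hdef]
  simp

theorem aux_point {K : Type*} [Field K] (g h : K[X]) (hg : g.natDegree ≤ 3) (hh : h.natDegree ≤ 3)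
    (hc : IsCoprime g h) (P : K)
    (hP : (derivative g * h - g * derivative h).eval P = 0) :
    (∃ x, (auxD g h).eval x = 0 ∧ h.eval P * g.eval x = g.eval P * h.eval x) ∨ 
    ((auxD g h).coeff 4 = 0 ∧ h.eval P * g.coeff 3 = g.eval P * h.coeff 3) := by
  obtain ⟨d1, d0⟩ := aux_double g h hg hh P hP _ (fun i => rfl)
  set a := h.eval P with ha
  set b := g.eval P with hb
  have hab : a ≠ 0 ∨ b ≠ 0 := aux_coprime hc P
  by_cases hu : a * g.coeff 3 - b * h.coeff 3 = 0
  · right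
    refine ⟨?_, sub_eq_zero.mp hu⟩
    obtain ⟨l, h1, h2⟩ := aux_prop hab (sub_eq_zero.mp hu)
    rw [auxD_coeff]
    simp only [hu, mul_zero, add_zero, zero_sub] at d0 d1
    have e : ∀ i, g.coeff 3 * h.coeff i - g.coeff i * h.coeff 3 = - l * (a * g.coeff i - b * h.coeff i) := by
      intro i; rw [h1, h2]; ring
    rw [e, e, e, d0, d1]
    ring
  · left
    set u := a * g.coeff 3 - b * h.coeff 3 with hudef
    set v := (a * g.coeff 2 - b * h.coeff 2) + 2 * P * u with hv
    set x := - v / u with hx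
    have hux : u * x = - v := by rw [hx]; field_simp
    have hgx : a * g.eval x = b * h.eval x := by
      have e1 : g.eval x = g.coeff 0 + g.coeff 1 * x + g.coeff 2 * x ^ 2 + g.coeff 3 * x ^ 3 := by
        conv_lhs => rw [aux_cubic g hg]
        simp
      have e2 : h.eval x = h.coeff 0 + h.coeff 1 * x + h.coeff 2 * x ^ 2 + h.coeff 3 * x ^ 3 := by
        conv_lhs => rw [aux_cubic h hh]
        simp
      rw [e1, e2]
      linear_combination d0 + x * d1 + (x - P) ^ 2 * hux - x ^ 2 * hv - x ^ 3 * hudef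
    refine ⟨x, ?_, hgx⟩
    obtain ⟨l, h1, h2⟩ := aux_prop hab hgx
    have eA : (auxA g h).eval x = l * u := by
      rw [auxA_eval g h hg hh, h1, h2, hudef]; ring
    have eB : (auxB g h).eval x = -2 * P * l * u := by
      rw [auxB_eval g h hg hh, eA, h1, h2]; linear_combination l * hux + l * hv
    have eC : (auxC g h).eval x = l * u * P ^ 2 := by
      rw [auxC_eval g h hg hh, eB, h1, h2]; linear_combination (-2 * P * l) * hux + l * d1
    rw [auxD_eval, eA, eB, eC]
    ring

theorem aux_roots {K : Type*} [Field K] (r : K[X]) (n : ℕ) (x : Fin n → K) (hx : Function.Injective x)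
    (hr : ∀ i, r.eval (x i) = 0) (hn : r.natDegree < n) : r = 0 := by
  apply Polynomial.eq_zero_of_natDegree_lt_card_of_eval_eq_zero r hx hr
  simpa using hn

theorem aux_inj2 {K : Type*} {x y : K} (hxy : x ≠ y) : Function.Injective ![x, y] := by
  intro a b hab
  fin_cases a <;> fin_cases b <;> simp at hab ⊢
  · exact hxy hab
  · exact hxy hab.symm

theorem aux_inj3 {K : Type*} {x y z : K} (hxy : x ≠ y) (hxz : x ≠ z) (hyz : y ≠ z) :
    Function.Injective ![x, y, z] := by
  intro a b hab
  fin_cases a <;> fin_cases b <;> simp at hab ⊢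
  · exact hxy hab
  · exact hxz hab
  · exact hxy hab.symm
  · exact hyz hab
  · exact hxz hab.symm
  · exact hyz hab.symm

theorem aux_notsq {K : Type*} [Field K] (g h : K[X]) (hg : g.natDegree ≤ 3) (hh : h.natDegree ≤ 3)
    (hc : IsCoprime g h) (hlead : g.coeff 3 ≠ 0 ∨ h.coeff 3 ≠ 0)
    (hW : derivative g * h - g * derivative h ≠ 0) (hD : auxD g h ≠ 0)
    (P : Fin 3 → K) (hPinj : Function.Injective P)
    (hP : ∀ i, (derivative g * h - g * derivative h).eval (P i) = 0) (c : K) (hc0 : c ≠ 0) (r : K[X]) : 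
    C c * auxD g h ≠ r ^ 2 := by
  intro heq
  have hr0 : r ≠ 0 := by
    rintro rfl
    rw [zero_pow two_ne_zero] at heq
    exact mul_ne_zero (C_ne_zero.mpr hc0) hD heq
  have hrdeg : 2 * r.natDegree = (auxD g h).natDegree := by
    rw [← natDegree_pow, ← heq, natDegree_C_mul hc0]
  have hroot : ∀ x, (auxD g h).eval x = 0 → r.eval x = 0 := by
    intro x hx
    have := congrArg (eval x) heq
    rw [eval_mul, hx, mul_zero, eval_pow, eq_comm] at this
    exact pow_eq_zero_iff two_ne_zero |>.mp this
  have hcol : ∀ i j, i ≠ j → ∀ y z : K, (y ≠ 0 ∨ z ≠ 0) → h.eval (P i) * y = g.eval (P i) * z →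
      h.eval (P j) * y = g.eval (P j) * z → False := by
    intro i j hij y z hyz h1 h2
    refine aux_inj g h hg hh hc hW (P i) (P j) (fun e => hij (hPinj e)) (hP i) (hP j) ?_
    rcases hyz with hy | hz
    · apply mul_left_cancel₀ hy
      linear_combination g.eval (P j) * h1 - g.eval (P i) * h2
    · apply mul_left_cancel₀ hz
      linear_combination h.eval (P j) * h1 - h.eval (P i) * h2
  have hfin : ∀ i j x y, i ≠ j → h.eval (P i) * g.eval x = g.eval (P i) * h.eval x →
      h.eval (P j) * g.eval y = g.eval (P j) * h.eval y → x ≠ y := by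
    intro i j x y hij h1 h2 hxy
    subst hxy
    exact hcol i j hij _ _ (aux_coprime hc x).symm h1 h2
  have hinf2 : (auxD g h).coeff 4 = 0 → r.natDegree < 2 := by
    intro h4
    by_contra hcon
    have h5 := auxD_deg g h
    have h6 : (auxD g h).natDegree = 4 := by omega
    rw [← h6] at h4
    exact hD (leadingCoeff_eq_zero.mp h4)
  have htwo : ∀ i j x y, i ≠ j → (auxD g h).coeff 4 = 0 → (auxD g h).eval x = 0 → (auxD g h).eval y = 0 → 
      h.eval (P i) * g.eval x = g.eval (P i) * h.eval x →
      h.eval (P j) * g.eval y = g.eval (P j) * h.eval y → False := by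
    intro i j x y hij h4 hx hy h1 h2
    have hxy := hfin i j x y hij h1 h2
    refine hr0 (aux_roots r 2 ![x, y] ?_ ?_ (hinf2 h4))
    · exact aux_inj2 hxy
    · intro i; fin_cases i
      · exact hroot x hx
      · exact hroot y hy
  have pt := fun i => aux_point g h hg hh hc (P i) (hP i)
  rcases pt 0 with ⟨x, hx, hx'⟩ | ⟨h4, hx⟩ <;> rcases pt 1 with ⟨y, hy, hy'⟩ | ⟨h4', hy⟩ <;>
    rcases pt 2 with ⟨z, hz, hz'⟩ | ⟨h4'', hz⟩
  · have hxy := hfin 0 1 x y (by decide) hx' hy'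
    have hxz := hfin 0 2 x z (by decide) hx' hz'
    have hyz := hfin 1 2 y z (by decide) hy' hz'
    refine hr0 (aux_roots r 3 ![x, y, z] ?_ ?_ ?_)
    · exact aux_inj3 hxy hxz hyz
    · intro i; fin_cases i
      · exact hroot x hx
      · exact hroot y hy
      · exact hroot z hz
    · have := auxD_deg g h
      omega
  · exact htwo 0 1 x y (by decide) h4'' hx hy hx' hy'
  · exact htwo 0 2 x z (by decide) h4' hx hz hx' hz'
  · exact hcol 1 2 (by decide) _ _ hlead hy hz
  · exact htwo 1 2 y z (by decide) h4 hy hz hy' hz'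
  · exact hcol 0 2 (by decide) _ _ hlead hx hz
  · exact hcol 0 1 (by decide) _ _ hlead hx hy
  · exact hcol 0 1 (by decide) _ _ hlead hx hy

theorem aux_Dne {F : Type*} [Field F] (h2 : (2 : F) ≠ 0) (g h : F[X])
    (hg : g.natDegree ≤ 3) (hh : h.natDegree ≤ 3)
    (hlead : g.coeff 3 ≠ 0 ∨ h.coeff 3 ≠ 0)
    (hsq : Squarefree (derivative g * h - g * derivative h))
    (hram : 3 ≤ (derivative g * h - g * derivative h).natDegree) : auxD g h ≠ 0 := by
  intro hD
  set W := derivative g * h - g * derivative h with hW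
  have hW0 : W ≠ 0 := hsq.ne_zero
  have hWe : W = auxA g h * X ^ 2 + auxB g h * X + auxC g h := aux_W g h hg hh
  have h1 : 4 * auxA g h * W = (2 * auxA g h * X + auxB g h) ^ 2 := by
    rw [hWe]
    unfold auxD at hD
    linear_combination (-1 : F[X]) * hD
  have h3 : W ∣ 2 * auxA g h * X + auxB g h := by
    have : W ∣ (2 * auxA g h * X + auxB g h) ^ 2 := ⟨4 * auxA g h, by rw [← h1]; ring⟩
    exact (hsq.dvd_pow_iff_dvd two_ne_zero).mp this
  obtain ⟨s, hs⟩ := h3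
  have h4 : 4 * auxA g h = W * s ^ 2 := by
    apply mul_right_cancel₀ hW0
    rw [h1, hs]; ring
  have h40 : (4 : F[X]) = C (4 : F) := (map_ofNat C 4).symm
  have h5 : 4 * auxA g h = 0 := by
    apply eq_zero_of_dvd_of_natDegree_lt (p := W) ⟨_, h4⟩
    rw [h40]
    exact lt_of_le_of_lt (natDegree_C_mul_le _ _) (lt_of_le_of_lt (auxA_deg g h) hram)
  have h6 : auxA g h = 0 := by
    rw [h40, mul_eq_zero, C_eq_zero] at h5
    refine h5.resolve_left ?_
    rw [show (4 : F) = 2 * 2 by norm_num]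
    exact mul_ne_zero h2 h2
  apply hW0
  apply aux_Wzero (a := h.coeff 3) (b := g.coeff 3) hlead.symm
  have h7 : auxA g h = C (g.coeff 3) * h - C (h.coeff 3) * g := by
    conv_rhs => rw [aux_cubic g hg, aux_cubic h hh]
    simp [auxA]
    ring
  rw [h6, eq_comm, sub_eq_zero] at h7
  exact h7.symm

theorem aux_notsqF {F : Type*} [Field F] [Finite F] (h2 : (2 : F) ≠ 0) (g h : F[X])
    (hg : g.natDegree ≤ 3) (hh : h.natDegree ≤ 3) (hc : IsCoprime g h)
    (hlead : g.coeff 3 ≠ 0 ∨ h.coeff 3 ≠ 0)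
    (hsq : Squarefree (derivative g * h - g * derivative h))
    (hram : 3 ≤ (derivative g * h - g * derivative h).natDegree) (c : F) (hc0 : c ≠ 0) (r : F[X]) :
    C c * auxD g h ≠ r ^ 2 := by
  classical
  intro heq
  have hD := aux_Dne h2 g h hg hh hlead hsq hram
  let φ := algebraMap F (AlgebraicClosure F)
  have hφ : Function.Injective φ := φ.injective
  set W := derivative g * h - g * derivative h with hW
  have hW0 : W ≠ 0 := hsq.ne_zero
  have hWm : derivative (g.map φ) * h.map φ - g.map φ * derivative (h.map φ) = W.map φ := by
    simp [hW, Polynomial.map_sub, Polynomial.map_mul, derivative_map]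
  have hsep : W.Separable := PerfectField.separable_iff_squarefree.mpr hsq
  have hcard : 3 ≤ (W.map φ).roots.toFinset.card := by
    rw [Multiset.toFinset_card_of_nodup (nodup_roots (hsep.map))]
    rw [← (IsAlgClosed.splits (W.map φ)).natDegree_eq_card_roots, natDegree_map]
    exact hram
  obtain ⟨T, hT, hTc⟩ := Finset.exists_subset_card_eq hcard
  let P : Fin 3 → AlgebraicClosure F := fun i => (T.equivFinOfCardEq hTc).symm i
  refine aux_notsq (g.map φ) (h.map φ) (by rwa [natDegree_map]) (by rwa [natDegree_map])
    (hc.map (mapRingHom φ)) ?_ ?_ ?_ P ?_ ?_ (φ c) ?_ (r.map φ) ?_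
  · simpa using hlead
  · rw [hWm]; exact (Polynomial.map_ne_zero_iff hφ).mpr hW0
  · rw [← auxD_map]; exact (Polynomial.map_ne_zero_iff hφ).mpr hD
  · intro i j hij
    exact (T.equivFinOfCardEq hTc).symm.injective (Subtype.ext hij)
  · intro i
    rw [hWm]
    have := hT ((T.equivFinOfCardEq hTc).symm i).2
    rw [Multiset.mem_toFinset, mem_roots'] at this
    exact this.2
  · simpa using hc0
  · rw [← auxD_map, ← map_C, ← Polynomial.map_mul, heq, Polynomial.map_pow]

theorem aux_image_card {α β : Type*} [DecidableEq α] [DecidableEq β] (X : Finset α) (R : α → β) :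
    ((X.image R).card : ℝ) = ∑ x ∈ X, (1 : ℝ) / ((X.filter fun y => R y = R x).card : ℝ) := by
  rw [← Finset.sum_fiberwise_of_maps_to (g := R) (t := X.image R)
    (fun x hx => Finset.mem_image_of_mem R hx)]
  rw [Finset.card_eq_sum_ones]
  push_cast
  refine Finset.sum_congr rfl fun b hb => ?_
  obtain ⟨x, hx, rfl⟩ := Finset.mem_image.mp hb
  have h1 : ∀ y ∈ X.filter (fun y => R y = R x), 
      (1 : ℝ) / ((X.filter fun z => R z = R y).card : ℝ) = 1 / ((X.filter fun z => R z = R x).card : ℝ) := by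
    intro y hy
    rw [(Finset.mem_filter.mp hy).2]
  rw [Finset.sum_congr rfl h1, Finset.sum_const, nsmul_eq_mul]
  have : ((X.filter fun z => R z = R x).card : ℝ) ≠ 0 := by
    have : x ∈ X.filter fun z => R z = R x := by simp [hx]
    exact_mod_cast (Finset.card_pos.mpr ⟨x, this⟩).ne'
  field_simp

theorem aux_fiber {K : Type*} [Field K] [Fintype K] [DecidableEq K] (h2 : (2 : K) ≠ 0) (g h : K[X])
    (hg : g.natDegree ≤ 3) (hh : h.natDegree ≤ 3) (hc : IsCoprime g h) (x : K) (hhx : h.eval x ≠ 0)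
    (hA : (auxA g h).eval x ≠ 0) (hD : (auxD g h).eval x ≠ 0)
    (hW : (derivative g * h - g * derivative h).eval x ≠ 0) :
    (3 : ℝ) / (((Finset.univ.filter fun y : K => h.eval y ≠ 0).filter fun y =>
      g.eval y / h.eval y = g.eval x / h.eval x).card : ℝ) = 2 - (quadraticChar K ((auxD g h).eval x) : ℝ) := by
  have hfib : ((Finset.univ.filter fun y : K => h.eval y ≠ 0).filter fun y =>
      g.eval y / h.eval y = g.eval x / h.eval x) = Finset.univ.filter fun y => y = x ∨ 
        (auxA g h).eval x * (y * y) + (auxB g h).eval x * y + (auxC g h).eval x = 0 := by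
    ext y
    simp only [Finset.mem_filter, Finset.mem_univ, true_and]
    have hG := auxG g h hg hh x y
    constructor
    · rintro ⟨h1, h3⟩
      rw [div_eq_div_iff h1 hhx] at h3
      rw [h3, sub_self, mul_eq_zero] at hG
      rcases hG with h4 | h4
      · right; rw [← h4]; ring
      · left; exact (sub_eq_zero.mp h4).symm
    · intro h3
      have h4 : g.eval x * h.eval y - g.eval y * h.eval x = 0 := by
        rw [← hG]
        rcases h3 with h3 | h3
        · rw [h3]; ring
        · linear_combination (x - y) * h3
      have h5 : h.eval y ≠ 0 := by
        intro h6
        rw [h6, mul_zero, zero_sub, neg_eq_zero, mul_eq_zero] at h4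
        rcases aux_coprime hc y with h7 | h7
        · exact h7 h6
        · exact h7 (h4.resolve_right hhx)
      refine ⟨h5, ?_⟩
      rw [div_eq_div_iff h5 hhx]
      exact (sub_eq_zero.mp h4).symm
  rw [hfib]
  have hWx : (auxA g h).eval x * (x * x) + (auxB g h).eval x * x + (auxC g h).eval x ≠ 0 := by
    rw [aux_W g h hg hh] at hW
    simp only [eval_add, eval_mul, eval_pow, eval_X] at hW
    rwa [← pow_two]
  have hdisc : discrim ((auxA g h).eval x) ((auxB g h).eval x) ((auxC g h).eval x) = (auxD g h).eval x := by
    rw [auxD_eval]; rfl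
  have : NeZero (2 : K) := ⟨h2⟩
  generalize (auxA g h).eval x = A at *
  generalize (auxB g h).eval x = B at *
  generalize (auxC g h).eval x = E at *
  generalize (auxD g h).eval x = D at *
  rcases quadraticChar_dichotomy hD with h1 | h1
  · rw [h1]
    obtain ⟨s, hs⟩ := (quadraticChar_one_iff_isSquare hD).mp h1
    have hs0 : s ≠ 0 := by rintro rfl; simp at hs; exact hD hs
    have hq := fun y => quadratic_eq_zero_iff hA (hdisc.trans hs) y
    simp only [hq]
    rw [Ne, hq x] at hWx
    push Not at hWx
    have hset : (Finset.univ.filter fun y => y = x ∨ y = (-B + s) / (2 * A) ∨ y = (-B - s) / (2 * A))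
        = {x, (-B + s) / (2 * A), (-B - s) / (2 * A)} := by
      ext y; simp
    rw [hset, Finset.card_eq_three.mpr ⟨x, _, _, hWx.1, hWx.2, ?_, rfl⟩]
    · norm_num
    · intro h4
      rw [div_left_inj' (mul_ne_zero h2 hA)] at h4
      apply mul_ne_zero h2 hs0
      linear_combination h4
  · rw [h1]
    have hns : ¬ IsSquare D := quadraticChar_neg_one_iff_not_isSquare.mp h1
    have hset : (Finset.univ.filter fun y => y = x ∨ A * (y * y) + B * y + E = 0) = {x} := by
      ext y
      simp only [Finset.mem_filter, Finset.mem_univ, true_and, Finset.mem_singleton, or_iff_left_iff_imp]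
      intro h4
      exfalso
      refine quadratic_ne_zero_of_discrim_ne_sq (fun s hs => hns ⟨s, ?_⟩) y h4
      rw [← hdisc, hs, pow_two]
    rw [hset]
    norm_num

theorem aux_count {K : Type*} [Field K] [Fintype K] [DecidableEq K] (h2 : (2 : K) ≠ 0) (g h : K[X])
    (hg : g.natDegree ≤ 3) (hh : h.natDegree ≤ 3) (hc : IsCoprime g h)
    (hA : auxA g h ≠ 0) (hD : auxD g h ≠ 0)
    (hW : derivative g * h - g * derivative h ≠ 0) (N : Finset K)
    (hN : ∀ α, α ∈ N ↔ ∀ x, g.eval x ≠ α * h.eval x) :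
    |3 * (N.card : ℝ) - Fintype.card K - ((∑ x : K, quadraticChar K ((auxD g h).eval x) : ℤ) : ℝ)| ≤ 42 := by
  classical
  set X := Finset.univ.filter fun y : K => h.eval y ≠ 0 with hX
  set R : K → K := fun y => g.eval y / h.eval y with hR
  set χ : K → ℤ := fun x => quadraticChar K ((auxD g h).eval x) with hχ
  have hcompl : N = (X.image R)ᶜ := by
    ext α
    rw [hN, Finset.mem_compl, Finset.mem_image]
    push Not
    constructor
    · intro h1 x hx h3
      have h4 := (Finset.mem_filter.mp hx).2
      apply h1 x
      rw [← h3, hR]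
      field_simp
    · intro h1 x h3
      have h4 : h.eval x ≠ 0 := by
        intro h5
        rw [h5, mul_zero] at h3
        rcases aux_coprime hc x with h7 | h7
        · exact h7 h5
        · exact h7 h3
      apply h1 x (by simp [hX, h4])
      simp only [hR]
      rw [h3]; field_simp
  have hcardN : (N.card : ℝ) = Fintype.card K - (X.image R).card := by
    rw [hcompl, Finset.card_compl, Nat.cast_sub (Finset.card_le_univ _)]
  have hh0 : h ≠ 0 := by
    rintro rfl
    simp at hW
  set E : K[X] := h * auxA g h * auxD g h * (derivative g * h - g * derivative h) with hE
  have hE0 : E ≠ 0 := mul_ne_zero (mul_ne_zero (mul_ne_zero hh0 hA) hD) hW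
  have hEdeg : E.natDegree ≤ 14 := by
    have w1 : (derivative g * h - g * derivative h).natDegree ≤ 5 := by
      have a1 := natDegree_derivative_le g
      have a2 := natDegree_derivative_le h
      refine (natDegree_sub_le _ _).trans (max_le ?_ ?_) <;> refine natDegree_mul_le.trans ?_ <;> omega
    have w2 := auxA_deg g h
    have w3 := auxD_deg g h
    refine natDegree_mul_le.trans ?_
    have w4 : (h * auxA g h * auxD g h).natDegree ≤ h.natDegree + (auxA g h).natDegree + (auxD g h).natDegree :=
      natDegree_mul_le.trans (Nat.add_le_add_right natDegree_mul_le _)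
    omega
  set Bad : Finset K := Finset.univ.filter fun x => E.eval x = 0 with hBad
  have hBadc : Bad.card ≤ 14 := by
    refine le_trans (card_le_degree_of_subset_roots (p := E) ?_) hEdeg
    intro x hx
    rw [mem_roots hE0]
    exact (Finset.mem_filter.mp hx).2
  set T : K → ℝ := fun x => if x ∈ X then (3 : ℝ) / ((X.filter fun y => R y = R x).card : ℝ) else 0 with hT
  have him : 3 * ((X.image R).card : ℝ) = ∑ x : K, T x := by
    rw [aux_image_card, hT, Finset.sum_ite_mem, Finset.univ_inter, Finset.mul_sum]
    refine Finset.sum_congr rfl fun x _ => ?_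
    ring
  have hgood : ∀ x, x ∉ Bad → T x - (2 - χ x) = 0 := by
    intro x hx
    have h1 : E.eval x ≠ 0 := by simpa [hBad] using hx
    simp only [hE, eval_mul] at h1
    have h3 := mul_ne_zero_iff.mp h1
    have h4 := mul_ne_zero_iff.mp h3.1
    have h5 := mul_ne_zero_iff.mp h4.1
    have hxX : x ∈ X := by simp [hX, h5.1]
    simp only [hT, if_pos hxX, hχ]
    rw [sub_eq_zero]
    exact aux_fiber h2 g h hg hh hc x h5.1 h5.2 h4.2 h3.2
  have hall : ∀ x, |T x - (2 - χ x)| ≤ 3 := by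
    intro x
    have h1 : 0 ≤ T x ∧ T x ≤ 3 := by
      simp only [hT]
      split_ifs with hx
      · have : (1 : ℝ) ≤ ((X.filter fun y => R y = R x).card : ℝ) := by
          have : x ∈ X.filter fun z => R z = R x := by simp [hx]
          exact_mod_cast (Finset.card_pos.mpr ⟨x, this⟩)
        refine ⟨by positivity, ?_⟩
        rw [div_le_iff₀ (by linarith)]
        linarith
      · norm_num
    have h3 : (χ x : ℝ) = 0 ∨ (χ x : ℝ) = 1 ∨ (χ x : ℝ) = -1 := by
      by_cases hy : (auxD g h).eval x = 0
      · left; simp [hχ, hy]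
      · right; rcases quadraticChar_dichotomy hy with h4 | h4 <;> simp only [hχ, h4] <;> norm_num
    rw [abs_le]
    rcases h3 with h3 | h3 | h3 <;> rw [h3] <;> constructor <;> linarith [h1.1, h1.2]
  have hfinal : 3 * (N.card : ℝ) - Fintype.card K - ((∑ x : K, χ x : ℤ) : ℝ) = - ∑ x : K, (T x - (2 - χ x)) := by
    rw [Finset.sum_sub_distrib, ← him, Finset.sum_sub_distrib, hcardN]
    push_cast
    simp
    ring
  rw [hfinal, abs_neg, ← Finset.sum_subset (Finset.subset_univ Bad) (fun x _ hx => hgood x hx)]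
  refine (Finset.abs_sum_le_sum_abs _ _).trans ?_
  refine (Finset.sum_le_card_nsmul _ _ 3 (fun x _ => hall x)).trans ?_
  rw [nsmul_eq_mul]
  have : (Bad.card : ℝ) ≤ 14 := by exact_mod_cast hBadc
  linarith

lemma aux_hom {F L : Type*} [Field F] [Field L] [Algebra F L] (f : F[X]) (a b α : L)
    (hab : a = α * b) :
    ∑ i ∈ Finset.range (f.natDegree + 1),
      algebraMap F L (f.coeff i) * a ^ i * b ^ (f.natDegree - i)
      = b ^ f.natDegree * aeval α f := by
  rw [aeval_eq_sum_range, Finset.mul_sum]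
  refine Finset.sum_congr rfl fun i hi => ?_
  have hi' : i ≤ f.natDegree := by simpa [Nat.lt_succ_iff] using hi
  have hb : b ^ f.natDegree = b ^ i * b ^ (f.natDegree - i) := by
    rw [← pow_add]; congr 1; omega
  rw [hb, hab, mul_pow, Algebra.smul_def]; ring

lemma aux_T2 {F L : Type*} [Field F] [Field L] [Algebra F L] (g h f : F[X]) (β α : L)
    (hab : aeval β g = α * aeval β h) :
    aeval β (ratTransform g h f) = (aeval β h) ^ f.natDegree * aeval α f := by
  rw [← aux_hom f _ _ α hab, ratTransform]
  simp

lemma aux_T1 {F : Type*} [Field F] (g h f : F[X]) (hg : g.natDegree ≤ 3) (hh : h.natDegree ≤ 3)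
    (hlead : g.coeff 3 ≠ 0 ∨ h.coeff 3 ≠ 0) (hf : Irreducible f) (hn : 1 < f.natDegree) :
    (ratTransform g h f).natDegree = 3 * f.natDegree := by
  have key : ∀ i ∈ Finset.range (f.natDegree + 1),
      (C (f.coeff i) * g ^ i * h ^ (f.natDegree - i)).natDegree ≤ 3 * f.natDegree ∧
      (C (f.coeff i) * g ^ i * h ^ (f.natDegree - i)).coeff (3 * f.natDegree)
        = f.coeff i * g.coeff 3 ^ i * h.coeff 3 ^ (f.natDegree - i) := by
    intro i hi
    have hi' : i ≤ f.natDegree := by simpa [Nat.lt_succ_iff] using hi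
    have e : 3 * f.natDegree = i * 3 + (f.natDegree - i) * 3 := by omega
    have d1 : (g ^ i).natDegree ≤ i * 3 := natDegree_pow_le_of_le i hg
    have d2 : (h ^ (f.natDegree - i)).natDegree ≤ (f.natDegree - i) * 3 :=
      natDegree_pow_le_of_le _ hh
    rw [mul_assoc]
    constructor
    · rw [e]
      exact (natDegree_C_mul_le _ _).trans (natDegree_mul_le_of_le d1 d2)
    · rw [coeff_C_mul, e, coeff_mul_add_eq_of_natDegree_le d1 d2,
        coeff_pow_of_natDegree_le hg, coeff_pow_of_natDegree_le hh, mul_assoc]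
  apply natDegree_eq_of_le_of_coeff_ne_zero
  · exact natDegree_sum_le_of_forall_le _ _ fun i hi => (key i hi).1
  · rw [ratTransform, finsetSum_coeff, Finset.sum_congr rfl fun i hi => (key i hi).2]
    by_cases h3 : h.coeff 3 = 0
    · have g3 : g.coeff 3 ≠ 0 := by tauto
      rw [Finset.sum_range_succ, Finset.sum_eq_zero]
      · simp [g3]
        intro h0; rw [h0] at hn; simp at hn
      · intro i hi
        have : f.natDegree - i ≠ 0 := by
          have := Finset.mem_range.1 hi; omega
        simp [h3, this]
    · have := aux_hom (L := F) f (g.coeff 3) (h.coeff 3) (g.coeff 3 / h.coeff 3)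
        (by field_simp)
      simp only [Algebra.algebraMap_self, RingHom.id_apply] at this
      rw [this]
      refine mul_ne_zero (pow_ne_zero _ h3) ?_
      intro h0
      have h1 : f.IsRoot (g.coeff 3 / h.coeff 3) := by simpa [aeval_def] using h0
      have h2 := degree_eq_one_of_irreducible_of_root hf h1
      have h5 : f.natDegree = 1 := natDegree_eq_of_degree_eq_some h2
      omega

lemma aux_T3 {F K : Type*} [Field F] [Field K] [Algebra F K] [FiniteDimensional F K]
    (g h : F[X]) (hg : g.natDegree ≤ 3) (hh : h.natDegree ≤ 3)
    (hlead : g.coeff 3 ≠ 0 ∨ h.coeff 3 ≠ 0) (hc : IsCoprime g h)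
    (hn : 1 < Module.finrank F K) (α : K)
    (hα : (minpoly F α).natDegree = Module.finrank F K) :
    Irreducible (ratTransform g h (minpoly F α)) ↔ ∀ x : K, aeval x g ≠ α * aeval x h := by
  have hintg : IsIntegral F α := IsIntegral.of_finite F α
  have hirr := minpoly.irreducible hintg
  have hdeg := aux_T1 g h _ hg hh hlead hirr (by omega)
  rw [hα] at hdeg
  constructor
  · intro hI x hx
    have h0 := aux_T2 g h (minpoly F α) x α hx
    rw [minpoly.aeval, mul_zero] at h0
    have hd := minpoly.dvd F x h0
    have hx' : IsIntegral F x := IsIntegral.of_finite F x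
    have ha := ((minpoly.irreducible hx').associated_of_dvd hI hd)
    have h1 := natDegree_eq_of_degree_eq (degree_eq_degree_of_associated ha)
    have h2 := minpoly.natDegree_le (A := F) x
    omega
  · intro hx
    set c : K[X] := g.map (algebraMap F K) - C α * h.map (algebraMap F K) with hcdef
    have hc3 : c.coeff 3 ≠ 0 := by
      simp only [hcdef, coeff_sub, coeff_map, coeff_C_mul]
      intro h0
      by_cases h3 : h.coeff 3 = 0
      · have g3 : g.coeff 3 ≠ 0 := by tauto
        simp [h3, g3] at h0
      · have hmem : α = algebraMap F K (g.coeff 3 / h.coeff 3) := by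
          have h3' : algebraMap F K (h.coeff 3) ≠ 0 := by simpa using h3
          rw [map_div₀, eq_div_iff h3']
          linear_combination -h0
        rw [hmem, minpoly.eq_X_sub_C] at hα
        simp at hα
        omega
    have hcd : c.natDegree = 3 := by
      apply natDegree_eq_of_le_of_coeff_ne_zero _ hc3
      refine (natDegree_sub_le _ _).trans (max_le ?_ ?_)
      · rw [natDegree_map]; exact hg
      · refine (natDegree_C_mul_le _ _).trans ?_
        rw [natDegree_map]; exact hh
    have hcirr : Irreducible c := by
      rw [irreducible_iff_roots_eq_zero_of_degree_le_three (by omega) (by omega)]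
      rw [Multiset.eq_zero_iff_forall_notMem]
      intro x hxm
      have := isRoot_of_mem_roots hxm
      apply hx x
      simp only [hcdef, IsRoot, eval_sub, eval_mul, eval_C, eval_map_algebraMap] at this
      linear_combination this
    have : Fact (Irreducible c) := ⟨hcirr⟩
    let E := AdjoinRoot c
    let β : E := AdjoinRoot.root c
    have hβ : aeval β g = algebraMap K E α * aeval β h := by
      have h0 : aeval β c = 0 := by
        rw [aeval_def]
        exact AdjoinRoot.eval₂_root c
      simp only [hcdef, map_sub, map_mul, aeval_map_algebraMap, aeval_C] at h0
      linear_combination h0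
    have : FiniteDimensional K E := (AdjoinRoot.powerBasis hcirr.ne_zero).finite
    have : FiniteDimensional F E := FiniteDimensional.trans F K E
    have hβh : aeval β h ≠ 0 := by
      intro h0
      obtain ⟨u, v, huv⟩ := hc
      have := congrArg (aeval β) huv
      simp [h0, hβ] at this
    set M := IntermediateField.adjoin F {β} with hM
    have hβM : β ∈ M := IntermediateField.mem_adjoin_simple_self F β
    have hpm : ∀ p : F[X], aeval β p ∈ M := fun p =>
      IntermediateField.algebra_adjoin_le_adjoin F {β} (aeval_mem_adjoin_singleton F β)
    have hαm : algebraMap K E α ∈ M := by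
      have : algebraMap K E α = aeval β g / aeval β h := by
        rw [eq_div_iff hβh, hβ]
      rw [this]
      exact div_mem (hpm g) (hpm h)
    have hKm : ∀ k : K, algebraMap K E k ∈ M := by
      have htop := (Field.primitive_element_iff_minpoly_natDegree_eq F α).2 hα
      have hle : IntermediateField.adjoin F {α} ≤ M.comap (IsScalarTower.toAlgHom F K E) := by
        rw [IntermediateField.adjoin_simple_le_iff]
        exact hαm
      rw [htop] at hle
      intro k
      exact hle (IntermediateField.mem_top (x := k))
    have hMtop : M = ⊤ := by
      rw [eq_top_iff]
      intro y _
      obtain ⟨p, rfl⟩ := AdjoinRoot.mk_surjective y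
      rw [← AdjoinRoot.aeval_eq, aeval_eq_sum_range]
      refine sum_mem fun i _ => ?_
      rw [Algebra.smul_def]
      exact mul_mem (hKm _) (pow_mem hβM i)
    have hmd : (minpoly F β).natDegree = 3 * Module.finrank F K := by
      have h1 := (Field.primitive_element_iff_minpoly_natDegree_eq F β).1 hMtop
      rw [h1, ← Module.finrank_mul_finrank F K E,
        (AdjoinRoot.powerBasis hcirr.ne_zero).finrank, AdjoinRoot.powerBasis_dim, hcd, mul_comm]
    have hβint : IsIntegral F β := IsIntegral.of_finite F β
    have h0 := aux_T2 g h (minpoly F α) β (algebraMap K E α) hβ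
    rw [aeval_algebraMap_apply, minpoly.aeval, map_zero, mul_zero] at h0
    have hd := minpoly.dvd F β h0
    have hne : ratTransform g h (minpoly F α) ≠ 0 := by
      intro h1
      rw [h1] at hdeg
      simp at hdeg
      omega
    have has := associated_of_dvd_of_natDegree_le hd hne (by omega)
    exact has.irreducible (minpoly.irreducible hβint)

lemma aux_T4 {F K : Type*} [Field F] [Finite F] [Field K] [Fintype K] [DecidableEq K]
    [Algebra F K] (g h : F[X]) (hg : g.natDegree ≤ 3) (hh : h.natDegree ≤ 3)
    (hlead : g.coeff 3 ≠ 0 ∨ h.coeff 3 ≠ 0) (hc : IsCoprime g h) (n : ℕ)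
    (hK : Module.finrank F K = n) (hn : 1 < n) (S : Finset K)
    (hS : ∀ α, α ∈ S ↔ (minpoly F α).natDegree = n ∧ ∀ x : K, aeval x g ≠ α * aeval x h) :
    (S.card : ℕ) = n * (IrredSet g h n).ncard := by
  classical
  have : Module.Finite F K := Module.Finite.of_finite
  have hset : IrredSet g h n = ↑(S.image (minpoly F)) := by
    ext f
    simp only [IrredSet, Set.mem_ofPred_eq, Finset.coe_image, Set.mem_image, Finset.mem_coe]
    constructor
    · rintro ⟨hm, hi, hd, hr⟩
      have : Fact (Irreducible f) := ⟨hi⟩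
      have hfr : Module.finrank F (AdjoinRoot f) = n := by
        rw [(AdjoinRoot.powerBasis hi.ne_zero).finrank, AdjoinRoot.powerBasis_dim, hd]
      obtain ⟨e⟩ := FiniteField.nonempty_algHom_of_finrank_dvd (F := F) (K := AdjoinRoot f)
        (L := K) (by rw [hfr, hK])
      have hroot : aeval (e (AdjoinRoot.root f)) f = 0 := by
        rw [aeval_algHom_apply]
        have : aeval (AdjoinRoot.root f) f = 0 := by
          rw [aeval_def]; exact AdjoinRoot.eval₂_root f
        rw [this, map_zero]
      have hmp := minpoly.eq_of_irreducible_of_monic hi hroot hm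
      refine ⟨e (AdjoinRoot.root f), (hS _).2 ⟨by rw [← hmp, hd], ?_⟩, hmp.symm⟩
      rw [hmp] at hr
      exact (aux_T3 g h hg hh hlead hc (by omega) _ (by rw [← hmp, hd, hK])).1 hr
    · rintro ⟨α, hα, rfl⟩
      obtain ⟨h1, h2⟩ := (hS α).1 hα
      have hintg : IsIntegral F α := IsIntegral.of_finite F α
      exact ⟨minpoly.monic hintg, minpoly.irreducible hintg, h1,
        (aux_T3 g h hg hh hlead hc (by omega) _ (by rw [h1, hK])).2 h2⟩
  rw [hset, Set.ncard_coe_finset, Finset.card_eq_sum_card_image (minpoly F) S,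
    Finset.sum_const_nat (m := n), mul_comm]
  intro f hf
  obtain ⟨α, hα, rfl⟩ := Finset.mem_image.1 hf
  obtain ⟨h1, h2⟩ := (hS α).1 hα
  have hintg : IsIntegral F α := IsIntegral.of_finite F α
  have hcard := card_rootSet_eq_natDegree (K := K) (p := minpoly F α)
    (Algebra.IsSeparable.isSeparable F α) (Normal.splits inferInstance α)
  rw [h1] at hcard
  rw [← hcard, ← Set.toFinset_card]
  congr 1
  ext a
  simp only [Finset.mem_filter, Set.mem_toFinset, mem_rootSet]
  constructor
  · rintro ⟨_, h4⟩
    exact ⟨minpoly.ne_zero hintg, by rw [← h4]; exact minpoly.aeval F a⟩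
  · rintro ⟨_, h4⟩
    have hmp := minpoly.eq_of_irreducible_of_monic (minpoly.irreducible hintg) h4
      (minpoly.monic hintg)
    refine ⟨(hS a).2 ⟨by rw [← hmp, h1], ?_⟩, hmp.symm⟩
    have h5 := (aux_T3 g h hg hh hlead hc (by omega) α (by rw [h1, hK])).2 h2
    rw [hmp] at h5
    exact (aux_T3 g h hg hh hlead hc (by omega) a (by rw [← hmp, h1, hK])).1 h5

lemma aux_geom (q m : ℕ) (hq : 2 ≤ q) : ∑ d ∈ Finset.range (m + 1), q ^ d ≤ 2 * q ^ m := by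
  induction m with
  | zero => simp
  | succ m ih =>
    rw [Finset.sum_range_succ]
    have : 2 * q ^ m ≤ q ^ (m + 1) := by
      rw [pow_succ, mul_comm]; exact Nat.mul_le_mul_left _ hq
    omega

lemma aux_T5 {F K : Type*} [Field F] [Finite F] [Field K] [Fintype K] [DecidableEq K]
    [Algebra F K] (n : ℕ) (hn : 0 < n)
    (hK : Module.finrank F K = n) (S : Finset K)
    (hS : ∀ α ∈ S, (minpoly F α).natDegree ≠ n) :
    S.card ≤ 2 * Nat.card F ^ (n / 2) := by
  classical
  have : Module.Finite F K := Module.Finite.of_finite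
  have hq : 2 ≤ Nat.card F := Finite.one_lt_card
  have hsub : S ⊆ (Finset.range (n / 2 + 1)).biUnion fun d =>
      if d = 0 then ∅ else (X ^ (Nat.card F ^ d) - X : K[X]).roots.toFinset := by
    intro α hα
    have hintg : IsIntegral F α := IsIntegral.of_finite F α
    have hirr := minpoly.irreducible hintg
    have h1 := hS α hα
    have hpos := hirr.natDegree_pos
    have hdv : (minpoly F α).natDegree ∣ n := hK ▸ minpoly.degree_dvd hintg
    have hle : (minpoly F α).natDegree ≤ n / 2 := by
      obtain ⟨k, hk⟩ := hdv
      rw [Nat.le_div_iff_mul_le two_pos]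
      have : 2 ≤ k := by
        rcases k with _ | _ | k
        · omega
        · simp at hk; omega
        · omega
      calc _ ≤ (minpoly F α).natDegree * k := Nat.mul_le_mul_left _ this
        _ = n := hk.symm
    rw [Finset.mem_biUnion]
    refine ⟨(minpoly F α).natDegree, by simp; omega, ?_⟩
    rw [if_neg hpos.ne', Multiset.mem_toFinset, mem_roots
      (FiniteField.X_pow_card_pow_sub_X_ne_zero K hpos.ne' hq)]
    have h2 := (hirr.natDegree_dvd_iff_dvd_X_pow_card_pow_sub_X
      (n := (minpoly F α).natDegree)).1 dvd_rfl
    obtain ⟨r, hr⟩ := h2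
    have h3 := congrArg (aeval α) hr
    simp at h3
    simpa using h3
  calc S.card ≤ _ := Finset.card_le_card hsub
    _ ≤ ∑ d ∈ Finset.range (n / 2 + 1), Nat.card F ^ d := by
      refine Finset.card_biUnion_le.trans (Finset.sum_le_sum fun d _ => ?_)
      split_ifs with h0
      · simp
      · refine (Multiset.toFinset_card_le _).trans ((card_roots' _).trans ?_)
        rw [FiniteField.X_pow_card_pow_sub_X_natDegree_eq K h0 hq]
    _ ≤ _ := aux_geom _ _ hq

lemma aux_core {F K : Type*} [Field F] [Fintype F] [Field K] [Fintype K] [Algebra F K]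
    (hodd : Odd (ringChar F))
    (g h : F[X]) (hcop : IsCoprime g h) (hdeg : max g.natDegree h.natDegree = 3)
    (hsq : Squarefree (derivative g * h - g * derivative h))
    (hram : 3 ≤ (derivative g * h - g * derivative h).natDegree) (n : ℕ) (hn : 1 < n)
    (hcK : Fintype.card K = Fintype.card F ^ n) (hfr : Module.finrank F K = n) :
    |3 * ((n : ℝ) * ((IrredSet g h n).ncard : ℝ)) - (Fintype.card F : ℝ) ^ n| ≤
      (52 + 10 * (Fintype.card F : ℝ) ^ 2) * (Fintype.card F : ℝ) ^ ((n : ℝ) / 2) := by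
  classical
  have hg : g.natDegree ≤ 3 := by rw [← hdeg]; exact le_max_left _ _
  have hh : h.natDegree ≤ 3 := by rw [← hdeg]; exact le_max_right _ _
  have hlead : g.coeff 3 ≠ 0 ∨ h.coeff 3 ≠ 0 := by
    rcases max_choice g.natDegree h.natDegree with hm | hm
    · left
      have h3 : g.natDegree = 3 := by omega
      rw [← h3]
      exact leadingCoeff_ne_zero.2 (by rintro rfl; simp at h3)
    · right
      have h3 : h.natDegree = 3 := by omega
      rw [← h3]
      exact leadingCoeff_ne_zero.2 (by rintro rfl; simp at h3)
  have hpp : (ringChar F).Prime := CharP.char_is_prime F (ringChar F)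
  have hFp : Fact (ringChar F).Prime := ⟨hpp⟩
  have hp2 : ringChar F ≠ 2 := by
    intro h0; rw [h0] at hodd; exact absurd hodd (by decide)
  have h2 : (2 : F) ≠ 0 := Ring.two_ne_zero hp2
  have hqodd : Odd (Fintype.card F) := by
    obtain ⟨k, _, hk⟩ := FiniteField.card F (ringChar F)
    rw [hk]; exact hodd.pow
  have hq3 : 3 ≤ Fintype.card F := by
    have h1 : 1 < Fintype.card F := Fintype.one_lt_card
    obtain ⟨m, hm⟩ := hqodd
    omega
  let N : Finset K := Finset.univ.filter fun α => ∀ x : K, aeval x g ≠ α * aeval x h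
  let S : Finset K := N.filter fun α => (minpoly F α).natDegree = n
  let T : Finset K := N.filter fun α => ¬ (minpoly F α).natDegree = n
  have hST : S.card + T.card = N.card := Finset.card_filter_add_card_filter_not _
  have hS : S.card = n * (IrredSet g h n).ncard :=
    aux_T4 g h hg hh hlead hcop n hfr hn S (by intro α; simp [S, N, and_comm])
  have hT : T.card ≤ 2 * Nat.card F ^ (n / 2) :=
    aux_T5 n (by omega) hfr T (by intro α hα; exact (Finset.mem_filter.1 hα).2)
  rw [Nat.card_eq_fintype_card] at hT
  have hS' : (n : ℝ) * ((IrredSet g h n).ncard : ℝ) = S.card := by rw [hS]; push_cast; rfl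
  rw [hS']
  set q : ℕ := Fintype.card F with hqdef
  have hqR : (1 : ℝ) ≤ q := by exact_mod_cast (by omega : 1 ≤ q)
  set Y : ℝ := (q : ℝ) ^ ((n : ℝ) / 2) with hY
  have hY1 : 1 ≤ Y := Real.one_le_rpow hqR (by positivity)
  have hpow : ∀ m : ℕ, (m : ℝ) ≤ 2 + (n : ℝ) / 2 → (q : ℝ) ^ m ≤ (q : ℝ) ^ 2 * Y := by
    intro m hm
    rw [← Real.rpow_natCast, ← Real.rpow_natCast (q : ℝ) 2, hY, ← Real.rpow_add (by linarith)]
    exact Real.rpow_le_rpow_of_exponent_le hqR (by exact_mod_cast hm)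
  by_cases hn4 : n < 4
  · have h1 : (S.card : ℝ) ≤ (q : ℝ) ^ n := by
      have : S.card ≤ q ^ n := by rw [← hcK]; exact Finset.card_le_univ S
      exact_mod_cast this
    have h0 : (0 : ℝ) ≤ S.card := by positivity
    have h3 := hpow n (by
      have : (n : ℝ) ≤ 3 := by exact_mod_cast (by omega : n ≤ 3)
      linarith)
    rw [abs_le]
    constructor <;> nlinarith
  · have hs1 : 1 ≤ n / 2 - 1 := by omega
    have hst : n / 2 - 1 + 2 ≤ n - (n / 2 - 1) := by omega
    have hsum : n / 2 - 1 + (n - (n / 2 - 1)) = n := by omega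
    have hns := aux_notsqF h2 g h hg hh hcop hlead hsq hram
    have hDdeg := auxD_deg g h
    have hcs := aux_charsum (auxD g h) hDdeg hns hqodd hq3 (n / 2 - 1) (n - (n / 2 - 1)) hs1 hst
      (K := K) (by rw [hsum]; exact hcK)
    have hinj := (algebraMap F K).injective
    have h2K : (2 : K) ≠ 0 := by
      rw [← map_ofNat (algebraMap F K) 2]
      exact (map_ne_zero (algebraMap F K)).2 h2
    have hW0 : derivative g * h - g * derivative h ≠ 0 := by
      intro h0; rw [h0] at hram; simp at hram
    have hD0 : auxD g h ≠ 0 := aux_Dne h2 g h hg hh hlead hsq hram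
    have hWK : derivative (g.map (algebraMap F K)) * (h.map (algebraMap F K))
        - (g.map (algebraMap F K)) * derivative (h.map (algebraMap F K)) ≠ 0 := by
      have := (Polynomial.map_ne_zero_iff hinj).2 hW0
      simpa [derivative_map] using this
    have hDK : auxD (g.map (algebraMap F K)) (h.map (algebraMap F K)) ≠ 0 := by
      rw [← auxD_map]; exact (Polynomial.map_ne_zero_iff hinj).2 hD0
    have hgK : (g.map (algebraMap F K)).natDegree ≤ 3 := by rw [natDegree_map]; exact hg
    have hhK : (h.map (algebraMap F K)).natDegree ≤ 3 := by rw [natDegree_map]; exact hh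
    have hAK : auxA (g.map (algebraMap F K)) (h.map (algebraMap F K)) ≠ 0 := by
      have h7 : ∀ u v : K[X], u.natDegree ≤ 3 → v.natDegree ≤ 3 →
          auxA u v = C (u.coeff 3) * v - C (v.coeff 3) * u := by
        intro u v hu hv
        conv_rhs => rw [aux_cubic u hu, aux_cubic v hv]
        simp [auxA]
        ring
      intro h0
      rw [h7 _ _ hgK hhK] at h0
      refine hWK (aux_Wzero (a := (h.map (algebraMap F K)).coeff 3)
        (b := (g.map (algebraMap F K)).coeff 3) ?_ ?_)
      · simp only [coeff_map, ne_eq, map_eq_zero]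
        exact hlead.symm
      · linear_combination -h0
    have hcnt := aux_count h2K (g.map (algebraMap F K)) (h.map (algebraMap F K)) hgK hhK
      (hcop.map (mapRingHom (algebraMap F K))) hAK hDK hWK N
      (by intro α; simp [N, eval_map_algebraMap])
    simp only [← auxD_map, eval_map_algebraMap] at hcnt
    set σ : ℤ := ∑ x : K, quadraticChar K (aeval x (auxD g h)) with hσ
    have hcs' : |(σ : ℝ)| ≤ 10 * (q : ℝ) ^ (n - (n / 2 - 1)) + 4 := by exact_mod_cast hcs
    rw [hcK] at hcnt
    push_cast at hcnt
    have hq1 := hpow (n - (n / 2 - 1)) (by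
      have h1 : 2 * (n - (n / 2 - 1)) ≤ 4 + n := by omega
      have h1' : (2 : ℝ) * ((n - (n / 2 - 1) : ℕ) : ℝ) ≤ 4 + n := by exact_mod_cast h1
      linarith)
    have hq2 : (q : ℝ) ^ (n / 2) ≤ Y := by
      rw [hY, ← Real.rpow_natCast]
      refine Real.rpow_le_rpow_of_exponent_le hqR ?_
      have h1 : 2 * (n / 2) ≤ n := by omega
      have h1' : (2 : ℝ) * ((n / 2 : ℕ) : ℝ) ≤ n := by exact_mod_cast h1
      linarith
    have hT' : (T.card : ℝ) ≤ 2 * (q : ℝ) ^ (n / 2) := by exact_mod_cast hT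
    have hT0 : (0 : ℝ) ≤ T.card := by positivity
    have hST' : (S.card : ℝ) + T.card = N.card := by exact_mod_cast hST
    rw [abs_le] at hcnt hcs' ⊢
    constructor <;> nlinarith

lemma aux_final {F : Type*} [Field F] [Fintype F] (hodd : Odd (ringChar F))
    (g h : F[X]) (hcop : IsCoprime g h) (hdeg : max g.natDegree h.natDegree = 3)
    (hsq : Squarefree (derivative g * h - g * derivative h))
    (hram : 3 ≤ (derivative g * h - g * derivative h).natDegree) (n : ℕ) (hn : 1 < n) :
    |3 * ((n : ℝ) * ((IrredSet g h n).ncard : ℝ)) - (Fintype.card F : ℝ) ^ n| ≤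
      (52 + 10 * (Fintype.card F : ℝ) ^ 2) * (Fintype.card F : ℝ) ^ ((n : ℝ) / 2) := by
  have hpp : (ringChar F).Prime := CharP.char_is_prime F (ringChar F)
  have hFp : Fact (ringChar F).Prime := ⟨hpp⟩
  have : NeZero n := ⟨by omega⟩
  let K := FiniteField.Extension F (ringChar F) n
  have : Fintype K := Fintype.ofFinite K
  have hcK : Fintype.card K = Fintype.card F ^ n := by
    rw [← Nat.card_eq_fintype_card, ← Nat.card_eq_fintype_card]
    exact FiniteField.natCard_extension F (ringChar F) n
  have hfr : Module.finrank F K = n := FiniteField.finrank_extension F (ringChar F) n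
  exact aux_core (K := K) hodd g h hcop hdeg hsq hram n hn hcK hfr

/-- Theorem 11: if `R = g/h` is a cubic rational expression over `F_q` of odd characteristic
with four distinct ramification points over the algebraic closure (i.e. `g'h − gh'` is
squarefree of degree `4`, or squarefree of degree `3` with `∞` as fourth ramification
point), then `|𝓘(g,h,n,q)| = q^n/(3n) + O(q^{n/2}/n)`. -/
theorem stmt11 {F : Type*} [Field F] [Fintype F] (q : ℕ) (hq : Fintype.card F = q)
    (hodd : Odd (ringChar F))
    (g h : F[X]) (hcop : IsCoprime g h) (hdeg : max g.natDegree h.natDegree = 3)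
    (hsq : Squarefree (derivative g * h - g * derivative h))
    (hram : (derivative g * h - g * derivative h).natDegree = 4 ∨
            (derivative g * h - g * derivative h).natDegree = 3) :
    ∃ Cst : ℝ, ∀ n : ℕ, 1 < n →
      |((IrredSet g h n).ncard : ℝ) - (q : ℝ) ^ n / (3 * n)| ≤
        Cst * (q : ℝ) ^ ((n : ℝ) / 2) / n := by
  refine ⟨52 + 10 * (q : ℝ) ^ 2, fun n hn => ?_⟩
  have h1 := aux_final hodd g h hcop hdeg hsq (by omega) n hn
  rw [hq] at h1
  have hn0 : (0 : ℝ) < n := by exact_mod_cast (by omega : 0 < n)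
  have h2 : ((IrredSet g h n).ncard : ℝ) - (q : ℝ) ^ n / (3 * n)
      = (3 * ((n : ℝ) * ((IrredSet g h n).ncard : ℝ)) - (q : ℝ) ^ n) / (3 * n) := by
    field_simp
  rw [h2, abs_div, abs_of_pos (by positivity : (0 : ℝ) < 3 * n), div_le_div_iff₀ (by positivity) hn0]
  have h3 := abs_nonneg (3 * ((n : ℝ) * ((IrredSet g h n).ncard : ℝ)) - (q : ℝ) ^ n)
  nlinarith
end

section
/- Let F_q be a finite field of characteristic three and let n > 1 be an integer. Then |𝓘(x^3 + x^2, 1, n, q)| = (1/(3 n_3)) I(n/n_3, q^{n_3}). -/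
open Polynomial

/-- `I(n,q) = (1/n) ∑_{d ∣ n} μ(d) q^{n/d}`, used formally for any rational `q`. -/
noncomputable def Ifun (n : ℕ) (q : ℚ) : ℚ :=
  (1 / (n : ℚ)) * ∑ d ∈ n.divisors, ((ArithmeticFunction.moebius d : ℤ) : ℚ) * q ^ (n / d)

/-- `I(n/m, q)` with the convention that it is `0` when `m` does not divide `n`
(i.e. when `n/m` is not a positive integer). -/
noncomputable def IfunD (n m : ℕ) (q : ℚ) : ℚ := if m ∣ n then Ifun (n / m) q else 0

/-- `n₃`: the largest power of `3` dividing `n`. -/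
def nThree (n : ℕ) : ℕ := 3 ^ (n.factorization 3)

section Helpers

variable {F : Type*} [Field F] [Fintype F] {K : Type*} [Field K] [Algebra F K]

/-- The `k`-th power of the Frobenius. -/
noncomputable def Phi (F : Type*) [Field F] [Fintype F] (K : Type*) [Field K] [Algebra F K]
    (k : ℕ) : K →ₐ[F] K := (FiniteField.frobeniusAlgHom F K) ^ k

/-- degree of an element -/
noncomputable def dg (F : Type*) [Field F] {K : Type*} [Field K] [Algebra F K] (x : K) : ℕ :=
  (minpoly F x).natDegree

lemma Phi_apply (k : ℕ) (x : K) : Phi F K k x = x ^ (Fintype.card F ^ k) := by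
  simp [Phi, AlgHom.coe_pow, FiniteField.coe_frobeniusAlgHom, pow_iterate]

lemma Phi_add (a b : ℕ) (x : K) : Phi F K (a + b) x = Phi F K a (Phi F K b x) := by
  simp [Phi, pow_add]

lemma dg_dvd_iff [Algebra.IsAlgebraic F K] (k : ℕ) (x : K) : dg F x ∣ k ↔ Phi F K k x = x := by
  have hx : IsIntegral F x := Algebra.IsIntegral.isIntegral x
  rw [dg, (minpoly.irreducible hx).natDegree_dvd_iff_dvd_X_pow_card_pow_sub_X, minpoly.dvd_iff,
    Phi_apply]
  simp [sub_eq_zero, Nat.card_eq_fintype_card]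

lemma dg_dvd_of_imp [Algebra.IsAlgebraic F K] {x y : K}
    (h : ∀ k, Phi F K k x = x → Phi F K k y = y) : dg F y ∣ dg F x :=
  (dg_dvd_iff _ _).2 (h _ ((dg_dvd_iff _ _).1 dvd_rfl))

lemma Phi_comm (a b : ℕ) (x : K) : Phi F K a (Phi F K b x) = Phi F K b (Phi F K a x) := by
  rw [← Phi_add, ← Phi_add, add_comm]

lemma three_zero [CharP F 3] : (3 : K) = 0 := by
  have : ((3 : ℕ) : F) = 0 := CharP.cast_eq_zero F 3
  have h := congrArg (algebraMap F K) this
  rw [map_natCast, map_zero] at h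
  exact_mod_cast h

/-- The set of upper elements. -/
def BSet (F : Type*) [Field F] (K : Type*) [Field K] [Algebra F K] (n : ℕ) : Set K :=
  {b | dg F b = 3 * n ∧ dg F (b ^ 3 + b ^ 2) = n}

/-- Solutions of an Artin-Schreier type equation. -/
def TSet (F : Type*) [Field F] [Fintype F] (K : Type*) [Field K] [Algebra F K] (n : ℕ) : Set K :=
  {d | Phi F K n d = d - 1}

/-- Solutions of given degree. -/
def DSet (F : Type*) [Field F] [Fintype F] (K : Type*) [Field K] [Algebra F K] (n : ℕ) : Set K :=
  {d | Phi F K n d = d - 1 ∧ dg F d = 3 * n}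

lemma comp_monic {f : F[X]} (hf : f.Monic) : (f.comp (X ^ 3 + X ^ 2)).Monic ∧
    (f.comp (X ^ 3 + X ^ 2)).natDegree = 3 * f.natDegree := by
  have h1 : (X ^ 3 + X ^ 2 : F[X]).Monic := by monicity!
  have h2 : (X ^ 3 + X ^ 2 : F[X]).natDegree = 3 := by compute_degree!
  refine ⟨hf.comp h1 (by rw [h2]; norm_num), ?_⟩
  rw [natDegree_comp, h2, mul_comm]

lemma ratTransform_eq (f : F[X]) (g : F[X]) : ratTransform g 1 f = f.comp g := by
  simp [ratTransform, comp, eval₂_eq_sum_range]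

lemma aeval_comp' (f : F[X]) (b : K) :
    aeval b (f.comp (X ^ 3 + X ^ 2)) = aeval (b ^ 3 + b ^ 2) f := by
  simp [aeval_comp]

lemma dg_le [Algebra.IsAlgebraic F K] (b : K) : dg F b ≤ 3 * dg F (b ^ 3 + b ^ 2) := by
  have hx : IsIntegral F (b ^ 3 + b ^ 2) := Algebra.IsIntegral.isIntegral _
  obtain ⟨h1, h2⟩ := comp_monic (minpoly.monic hx)
  rw [dg, dg, ← h2]
  apply natDegree_le_of_dvd _ h1.ne_zero
  apply minpoly.dvd
  rw [aeval_comp', minpoly.aeval]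

lemma bsub_self [CharP F 3] [Algebra.IsAlgebraic F K] {n : ℕ} {d : K}
    (hd : Phi F K n d = d - 1) :
    Phi F K n (d ^ 2 + d) - (d ^ 2 + d) = d := by
  have h3 : (3 : K) = 0 := three_zero (F := F)
  simp only [map_add, map_pow, hd]
  linear_combination (-d) * h3

lemma dset_map [CharP F 3] [Algebra.IsAlgebraic F K] {n : ℕ} (hn : 0 < n) {d : K}
    (hd : d ∈ DSet F K n) : d ^ 2 + d ∈ BSet F K n := by
  obtain ⟨h1, h2⟩ := hd
  have h3 : (3 : K) = 0 := three_zero (F := F)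
  have hb : dg F (d ^ 2 + d) = 3 * n := by
    rw [← h2]
    apply Nat.dvd_antisymm
    · apply dg_dvd_of_imp
      intro k hk
      simp [hk]
    · apply dg_dvd_of_imp
      intro k hk
      have := bsub_self h1
      calc Phi F K k d = Phi F K k (Phi F K n (d ^ 2 + d) - (d ^ 2 + d)) := by rw [this]
        _ = d := by rw [map_sub, Phi_comm, hk, this]
  refine ⟨hb, ?_⟩
  have hdv : dg F ((d ^ 2 + d) ^ 3 + (d ^ 2 + d) ^ 2) ∣ n := by
    rw [dg_dvd_iff]
    have e : (d ^ 2 + d) ^ 3 + (d ^ 2 + d) ^ 2 = (d ^ 3 - d) ^ 2 := by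
      linear_combination (d ^ 5 + 2 * d ^ 4 + d ^ 3) * h3
    rw [e]
    have e2 : Phi F K n (d ^ 3 - d) = d ^ 3 - d := by
      simp only [map_sub, map_pow, h1]
      linear_combination (-d ^ 2 + d) * h3
    rw [map_pow, e2]
  have := dg_le (F := F) (d ^ 2 + d)
  have := Nat.le_of_dvd hn hdv
  omega

lemma bset_map [CharP F 3] [Algebra.IsAlgebraic F K] {n : ℕ} (hn : 0 < n) {b : K}
    (hb : b ∈ BSet F K n) : ∃ d ∈ DSet F K n, d ^ 2 + d = b := by
  obtain ⟨h1, h2⟩ := hb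
  have h3 : (3 : K) = 0 := three_zero (F := F)
  have hn1 : Phi F K n b ≠ b := by
    rw [Ne, ← dg_dvd_iff, h1]
    intro h
    have := Nat.le_of_dvd hn h
    omega
  have hn2 : Phi F K n (Phi F K n b) ≠ b := by
    rw [← Phi_add, Ne, ← dg_dvd_iff, h1]
    intro h
    have := Nat.le_of_dvd (by omega) h
    omega
  have ha : Phi F K n (b ^ 3 + b ^ 2) = b ^ 3 + b ^ 2 := by
    rw [← dg_dvd_iff, h2]
  obtain ⟨c, hc⟩ : ∃ c, c = Phi F K n b := ⟨_, rfl⟩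
  rw [← hc] at hn1 hn2
  simp only [map_add, map_pow, ← hc] at ha
  obtain ⟨d, hd⟩ : ∃ d, d = c - b := ⟨_, rfl⟩
  have hd0 : d ≠ 0 := by rw [hd]; exact sub_ne_zero.2 hn1
  have hcd : c = b + d := by rw [hd]; ring
  have hbd : d ^ 2 + d = b := by
    have : d * (d ^ 2 + d - b) = 0 := by
      rw [hcd] at ha
      linear_combination ha - (b ^ 2 * d + b * d ^ 2 + b * d) * h3
    rcases mul_eq_zero.1 this with h | h
    · exact absurd h hd0
    · linear_combination h
  have hcc : c = d ^ 2 - d := by linear_combination hcd - hbd + d * h3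
  obtain ⟨e, he⟩ : ∃ e, e = Phi F K n d := ⟨_, rfl⟩
  have hce : c = e ^ 2 + e := by rw [hc, ← hbd, he]; simp
  have hfac : (e + d) * (e - d + 1) = 0 := by
    linear_combination hcc - hce
  have hed : e = d - 1 := by
    rcases mul_eq_zero.1 hfac with h | h
    · exfalso
      apply hn2
      have h' : e = -d := by linear_combination h
      rw [hcc, ← hbd]
      simp only [map_sub, map_pow, ← he, h']
      ring
    · linear_combination h
  refine ⟨d, ⟨by rw [← he, hed], ?_⟩, hbd⟩
  rw [← h1]
  apply Nat.dvd_antisymm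
  · apply dg_dvd_of_imp
    intro k hk
    rw [hd, map_sub, hc, Phi_comm, hk]
  · apply dg_dvd_of_imp
    intro k hk
    rw [← hbd]
    simp [hk]

lemma bset_eq [CharP F 3] [Algebra.IsAlgebraic F K] {n : ℕ} (hn : 0 < n) :
    BSet F K n = (fun d => d ^ 2 + d) '' DSet F K n := by
  ext b
  constructor
  · intro hb
    exact bset_map hn hb
  · rintro ⟨d, hd, rfl⟩
    exact dset_map hn hd

lemma bset_ncard [CharP F 3] [Algebra.IsAlgebraic F K] {n : ℕ} (hn : 0 < n) :
    (BSet F K n).ncard = (DSet F K n).ncard := by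
  rw [bset_eq hn]
  apply Set.ncard_image_of_injOn
  intro x hx y hy hxy
  rw [← bsub_self hx.1, ← bsub_self hy.1]
  simp only at hxy
  rw [hxy]

lemma tset_eq [CharP F 3] {n : ℕ} (hn : 0 < n) : (TSet F K n).Finite ∧
    (IsAlgClosed K → (TSet F K n).ncard = Fintype.card F ^ n) := by
  classical
  have hq : 1 < Fintype.card F ^ n := Nat.one_lt_pow hn.ne' Fintype.one_lt_card
  obtain ⟨p, hp⟩ : ∃ p : F[X], p = X ^ (Fintype.card F ^ n) - X + 1 := ⟨_, rfl⟩
  have hdeg : p.natDegree = Fintype.card F ^ n := by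
    have h0 : (-X + 1 : F[X]).natDegree ≤ 1 := by compute_degree
    rw [hp, show (X ^ (Fintype.card F ^ n) - X + 1 : F[X]) = X ^ (Fintype.card F ^ n) + (-X + 1) by ring,
      natDegree_add_eq_left_of_natDegree_lt]
    · simp
    · simpa using lt_of_le_of_lt h0 hq
  have hp0 : p ≠ 0 := by
    rintro rfl
    simp at hdeg
    omega
  have hroot : TSet F K n = p.rootSet K := by
    ext x
    rw [mem_rootSet]
    simp only [TSet, Set.mem_setOf_eq, Phi_apply, hp0, ne_eq, not_false_eq_true, true_and]
    simp only [hp, map_add, map_sub, map_pow, aeval_X, map_one]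
    constructor
    · intro h; linear_combination h
    · intro h; linear_combination h
  refine ⟨hroot ▸ rootSet_finite p K, fun _ => ?_⟩
  rw [hroot, ← Nat.card_coe_set_eq, Nat.card_eq_fintype_card, card_rootSet_eq_natDegree, hdeg]
  · have hd : derivative p = -1 := by
      rw [hp]
      have : ((Fintype.card F ^ n : ℕ) : F) = 0 := by
        push_cast
        rw [FiniteField.cast_card_eq_zero, zero_pow hn.ne']
      simp [derivative_X_pow, this, hn.ne']
    rw [Separable, hd]
    exact isCoprime_one_right.neg_right
  · exact IsAlgClosed.splits _

lemma irred_mem [Algebra.IsAlgebraic F K] {n : ℕ} {b : K} (hb : b ∈ BSet F K n) :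
    minpoly F (b ^ 3 + b ^ 2) ∈ IrredSet (X ^ 3 + X ^ 2 : F[X]) 1 n := by
  have hx : IsIntegral F (b ^ 3 + b ^ 2) := Algebra.IsIntegral.isIntegral _
  have hb' : IsIntegral F b := Algebra.IsIntegral.isIntegral _
  obtain ⟨h1, h2⟩ := comp_monic (minpoly.monic hx)
  refine ⟨minpoly.monic hx, minpoly.irreducible hx, hb.2, ?_⟩
  rw [ratTransform_eq]
  have : minpoly F b = (minpoly F (b ^ 3 + b ^ 2)).comp (X ^ 3 + X ^ 2) := by
    refine (eq_of_monic_of_dvd_of_natDegree_le (minpoly.monic hb') h1 ?_ ?_).symm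
    · apply minpoly.dvd
      rw [aeval_comp', minpoly.aeval]
    · rw [h2]
      have e1 := hb.1
      have e2 := hb.2
      unfold dg at e1 e2
      rw [e1, e2]
  rw [← this]
  exact minpoly.irreducible hb'

lemma fiber_eq [Algebra.IsAlgebraic F K] {n : ℕ} {f : F[X]}
    (hf : f ∈ IrredSet (X ^ 3 + X ^ 2 : F[X]) 1 n) :
    {b | b ∈ BSet F K n ∧ minpoly F (b ^ 3 + b ^ 2) = f} =
      (f.comp (X ^ 3 + X ^ 2)).rootSet K := by
  obtain ⟨hm, hi, hd, hr⟩ := hf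
  rw [ratTransform_eq] at hr
  obtain ⟨h1, h2⟩ := comp_monic hm
  ext b
  rw [mem_rootSet, aeval_comp']
  constructor
  · rintro ⟨_, h⟩
    exact ⟨h1.ne_zero, by rw [← h, minpoly.aeval]⟩
  · rintro ⟨_, h⟩
    have e1 := minpoly.eq_of_irreducible_of_monic hi h hm
    have e2 := minpoly.eq_of_irreducible_of_monic hr (x := b) (by rw [aeval_comp', h]) h1
    refine ⟨⟨?_, ?_⟩, e1.symm⟩
    · rw [dg, ← e2, h2, hd]
    · rw [dg, ← e1, hd]

lemma fiber_card [Algebra.IsAlgebraic F K] [IsAlgClosed K] {n : ℕ} {f : F[X]}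
    (hf : f ∈ IrredSet (X ^ 3 + X ^ 2 : F[X]) 1 n) :
    {b | b ∈ BSet F K n ∧ minpoly F (b ^ 3 + b ^ 2) = f}.ncard = 3 * n := by
  classical
  rw [fiber_eq hf]
  obtain ⟨hm, hi, hd, hr⟩ := hf
  rw [ratTransform_eq] at hr
  obtain ⟨h1, h2⟩ := comp_monic hm
  rw [← Nat.card_coe_set_eq, Nat.card_eq_fintype_card, card_rootSet_eq_natDegree, h2, hd]
  · exact PerfectField.separable_of_irreducible hr
  · exact IsAlgClosed.splits _

lemma count_irred [CharP F 3] [Algebra.IsAlgebraic F K] [IsAlgClosed K] {n : ℕ} (hn : 0 < n) :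
    (DSet F K n).ncard = 3 * n * (IrredSet (X ^ 3 + X ^ 2 : F[X]) 1 n).ncard := by
  classical
  have hDfin : (DSet F K n).Finite := (tset_eq hn).1.subset (fun x hx => hx.1)
  have hBfin : (BSet F K n).Finite := by rw [bset_eq hn]; exact hDfin.image _
  have hI : IrredSet (X ^ 3 + X ^ 2 : F[X]) 1 n =
      (fun b : K => minpoly F (b ^ 3 + b ^ 2)) '' BSet F K n := by
    ext f
    constructor
    · intro hf
      have := fiber_card (K := K) hf
      have hne : {b | b ∈ BSet F K n ∧ minpoly F (b ^ 3 + b ^ 2) = f}.Nonempty := by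
        apply Set.nonempty_of_ncard_ne_zero
        omega
      obtain ⟨b, hb⟩ := hne
      exact ⟨b, hb⟩
    · rintro ⟨b, hb, rfl⟩
      exact irred_mem hb
  have hIfin : (IrredSet (X ^ 3 + X ^ 2 : F[X]) 1 n).Finite := by
    rw [hI]; exact hBfin.image _
  rw [← bset_ncard hn, Set.ncard_eq_toFinset_card _ hBfin, Set.ncard_eq_toFinset_card _ hIfin,
    Finset.card_eq_sum_card_fiberwise (t := hIfin.toFinset)
      (f := fun b : K => minpoly F (b ^ 3 + b ^ 2))]
  · rw [Finset.sum_const_nat (m := 3 * n), mul_comm]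
    intro f hf
    rw [Set.Finite.mem_toFinset] at hf
    rw [← fiber_card (K := K) hf, ← Set.ncard_coe_finset]
    congr 1
    ext b
    simp
  · intro b hb
    simp only [Set.Finite.coe_toFinset] at hb ⊢
    exact irred_mem hb

lemma dg_neg [Algebra.IsAlgebraic F K] (d : K) : dg F (-d) = dg F d := by
  apply Nat.dvd_antisymm
  · apply dg_dvd_of_imp
    intro k hk
    simp [hk]
  · apply dg_dvd_of_imp
    intro k hk
    simpa using hk

lemma Phi_mul_period [Algebra.IsAlgebraic F K] (d : K) (k j : ℕ) (h : dg F d ∣ j) :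
    Phi F K (k + j) d = Phi F K k d := by
  rw [Phi_add, (dg_dvd_iff _ _).1 h]

lemma piece_card [CharP F 3] [Algebra.IsAlgebraic F K] (k e : ℕ) (he : ¬ 3 ∣ e) :
    {d | d ∈ TSet F K (k * e) ∧ dg F d = 3 * k}.ncard = (DSet F K k).ncard := by
  have h12 : e % 3 = 1 ∨ e % 3 = 2 := by omega
  rcases h12 with h | h
  · congr 1
    ext d
    simp only [TSet, DSet, Set.mem_setOf_eq]
    refine and_congr_left fun hd => ?_
    obtain ⟨s, rfl⟩ : ∃ s, e = 3 * s + 1 := ⟨e / 3, by omega⟩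
    rw [show k * (3 * s + 1) = k + 3 * k * s by ring, Phi_mul_period _ _ _ (hd ▸ dvd_mul_right _ _)]
  · have : {d | d ∈ TSet F K (k * e) ∧ dg F d = 3 * k} = (fun x => -x) '' DSet F K k := by
      ext d
      rw [Set.image_neg_eq_neg, Set.mem_neg]
      simp only [TSet, DSet, Set.mem_setOf_eq, dg_neg]
      refine and_congr_left fun hd => ?_
      obtain ⟨s, rfl⟩ : ∃ s, e = 3 * s + 2 := ⟨e / 3, by omega⟩
      rw [show k * (3 * s + 2) = (k + k) + 3 * k * s by ring,
        Phi_mul_period _ _ _ (hd ▸ dvd_mul_right _ _)]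
      have h3 : Phi F K k (Phi F K (k + k) d) = d := by
        rw [← Phi_add, ← dg_dvd_iff, hd]
        exact ⟨1, by ring⟩
      constructor
      · intro h
        rw [h, map_sub, map_one] at h3
        rw [map_neg]
        linear_combination -h3
      · intro h
        rw [map_neg] at h
        have h' : Phi F K k d = d + 1 := by linear_combination -h
        rw [Phi_add, h', map_add, map_one, h']
        linear_combination three_zero (F := F) (K := K)
    rw [this, Set.ncard_image_of_injective _ neg_injective]

lemma tset_deg [CharP F 3] [Algebra.IsAlgebraic F K] {a m : ℕ} (hm : 0 < m) {d : K}
    (hd : d ∈ TSet F K (3 ^ a * m)) : ∃ v ∈ m.divisors, dg F d = 3 * (3 ^ a * v) := by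
  have hd' : Phi F K (3 ^ a * m) d = d - 1 := hd
  have hn : ¬ dg F d ∣ 3 ^ a * m := by
    rw [dg_dvd_iff, hd']
    intro h
    have : (1 : K) = 0 := by linear_combination -h
    exact one_ne_zero this
  have h3 : dg F d ∣ 3 ^ (a + 1) * m := by
    rw [show 3 ^ (a + 1) * m = 3 ^ a * m + (3 ^ a * m + 3 ^ a * m) by ring, dg_dvd_iff, Phi_add,
      Phi_add, hd']
    simp only [map_sub, map_one, hd']
    linear_combination -three_zero (F := F) (K := K)
  obtain ⟨u, v, hu, hv, huv⟩ := exists_dvd_and_dvd_of_dvd_mul h3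
  obtain ⟨b, hb, rfl⟩ := (Nat.dvd_prime_pow Nat.prime_three).1 hu
  have : b = a + 1 := by
    by_contra hne
    apply hn
    rw [huv]
    exact mul_dvd_mul (pow_dvd_pow _ (by omega)) hv
  subst this
  exact ⟨v, Nat.mem_divisors.2 ⟨hv, hm.ne'⟩, by rw [huv]; ring⟩

lemma sum_dset [CharP F 3] [Algebra.IsAlgebraic F K] [IsAlgClosed K] {a m : ℕ} (hm : 0 < m)
    (h3 : ¬ 3 ∣ m) :
    ∑ v ∈ m.divisors, (DSet F K (3 ^ a * v)).ncard = Fintype.card F ^ (3 ^ a * m) := by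
  classical
  have hn : 0 < 3 ^ a * m := by positivity
  obtain ⟨hfin, hcard⟩ := tset_eq (F := F) (K := K) hn
  rw [← hcard inferInstance, Set.ncard_eq_toFinset_card _ hfin,
    Finset.card_eq_sum_card_fiberwise (t := m.divisors.image (fun v => 3 * (3 ^ a * v)))
      (f := fun b : K => dg F b), Finset.sum_image]
  · apply Finset.sum_congr rfl
    intro v hv
    obtain ⟨⟨e, rfl⟩, _⟩ := Nat.mem_divisors.1 hv
    rw [← piece_card (3 ^ a * v) e (fun h => h3 (h.mul_left v)), ← Set.ncard_coe_finset]
    congr 1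
    ext b
    simp [mul_assoc]
  · intro x _ y _ hxy
    simpa using hxy
  · intro b hb
    simp only [Set.Finite.coe_toFinset] at hb
    obtain ⟨v, hv, h⟩ := tset_deg hm hb
    simp only [Finset.coe_image, Set.mem_image, Finset.mem_coe]
    exact ⟨v, hv, h.symm⟩

lemma dset_moebius [CharP F 3] [Algebra.IsAlgebraic F K] [IsAlgClosed K] {a m : ℕ} (hm : 0 < m)
    (h3 : ¬ 3 ∣ m) :
    ((DSet F K (3 ^ a * m)).ncard : ℚ) =
      ∑ d ∈ m.divisors, ((ArithmeticFunction.moebius d : ℤ) : ℚ) *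
        ((Fintype.card F : ℚ) ^ 3 ^ a) ^ (m / d) := by
  have key := (ArithmeticFunction.sum_eq_iff_sum_mul_moebius_eq_on (R := ℚ)
    (f := fun v => ((DSet F K (3 ^ a * v)).ncard : ℚ))
    (g := fun v => ((Fintype.card F : ℚ) ^ 3 ^ a) ^ v)
    {v | ¬ 3 ∣ v} (fun x y hxy hy h => hy (h.trans hxy))).1 (by
      intro v hv hv3
      rw [← pow_mul]
      exact_mod_cast sum_dset hv hv3) m hm h3
  rw [← key, Nat.sum_divisorsAntidiagonal
    (f := fun x y => ((ArithmeticFunction.moebius x : ℤ) : ℚ) *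
      ((Fintype.card F : ℚ) ^ 3 ^ a) ^ y)]

end Helpers

/-- Theorem 12: over `F_q` of characteristic three,
`|𝓘(x³+x², 1, n, q)| = (1/(3n₃)) I(n/n₃, q^{n₃})`. -/
theorem stmt12 {F : Type*} [Field F] [Fintype F] (q : ℕ) (hq : Fintype.card F = q)
    (hchar : ringChar F = 3) (n : ℕ) (hn : 1 < n) :
    ((IrredSet (X ^ 3 + X ^ 2 : F[X]) 1 n).ncard : ℚ) =
      (1 / (3 * (nThree n : ℚ))) * Ifun (n / nThree n) ((q : ℚ) ^ nThree n) := by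
  classical
  subst hq
  haveI : CharP F 3 := hchar ▸ ringChar.charP F
  have hn0 : n ≠ 0 := by omega
  obtain ⟨a, ha⟩ : ∃ a, a = n.factorization 3 := ⟨_, rfl⟩
  obtain ⟨m, hm⟩ : ∃ m, n = 3 ^ a * m := ha ▸ Nat.ordProj_dvd n 3
  have hdiv : n / nThree n = m := by
    rw [nThree, ← ha, hm]
    exact Nat.mul_div_cancel_left _ (by positivity)
  have h3 : ¬ 3 ∣ m := by
    rw [← hdiv, nThree]
    exact Nat.not_dvd_ordCompl Nat.prime_three hn0
  have hm0 : 0 < m := by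
    rcases Nat.eq_zero_or_pos m with h | h
    · simp [h] at h3
    · exact h
  have h1 := count_irred (F := F) (K := AlgebraicClosure F) (n := n) (by omega)
  have h2 := dset_moebius (F := F) (K := AlgebraicClosure F) (a := a) hm0 h3
  rw [hdiv, Ifun]
  have hN : nThree n = 3 ^ a := by rw [nThree, ← ha]
  rw [hN, ← h2, ← hm, h1]
  have hnq : (n : ℚ) = 3 ^ a * m := by rw [hm]; push_cast; ring
  have hmq : (m : ℚ) ≠ 0 := by exact_mod_cast hm0.ne'
  push_cast
  rw [hnq]
  field_simp
end

section
/- Let F_q be a finite field of characteristic three and let n > 1 be an integer. Then |𝓘(x^3 − x, 1, n, q)| = (2/(3 n_3)) I(n/n_3, q^{n_3}). -/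
open Polynomial

open IntermediateField in
/-- Additive Hilbert 90 over the prime field with three elements. -/
theorem h90_three (E : Type*) [Field E] [Finite E] [Algebra (ZMod 3) E] (a : E) :
    (∃ b : E, b ^ 3 - b = a) ↔ Algebra.trace (ZMod 3) E a = 0 := by
  have : Module.Finite (ZMod 3) E := Module.Finite.of_finite
  let fr : E ≃ₐ[ZMod 3] E := FiniteField.frobeniusAlgEquivOfAlgebraic (ZMod 3) E
  have hfr : ∀ x, fr x = x ^ 3 := fun x => by
    simp [fr]
  let L : E →ₗ[ZMod 3] E := fr.toLinearMap - LinearMap.id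
  have hL : ∀ x, L x = x ^ 3 - x := fun x => by simp [L, hfr]
  let T := Algebra.trace (ZMod 3) E
  have hle : LinearMap.range L ≤ LinearMap.ker T := by
    rintro _ ⟨x, rfl⟩
    rw [LinearMap.mem_ker, hL, map_sub, ← hfr, Algebra.trace_eq_of_algEquiv, sub_self]
  have hk : LinearMap.ker L ≤ Submodule.span (ZMod 3) {(1 : E)} := by
    intro x hx
    rw [LinearMap.mem_ker, hL] at hx
    have h : x * ((x - 1) * (x + 1)) = 0 := by linear_combination hx
    rw [Submodule.mem_span_singleton]
    rcases mul_eq_zero.1 h with h | h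
    · exact ⟨0, by simp [h]⟩
    rcases mul_eq_zero.1 h with h | h
    · exact ⟨1, by rw [one_smul]; linear_combination -h⟩
    · exact ⟨-1, by rw [neg_smul, one_smul]; linear_combination -h⟩
  have h1 : Module.finrank (ZMod 3) (LinearMap.ker L) ≤ 1 :=
    (Submodule.finrank_mono hk).trans (finrank_span_singleton (K := ZMod 3) (one_ne_zero)).le
  have h2 := LinearMap.finrank_range_add_finrank_ker L
  have h3 := LinearMap.finrank_range_add_finrank_ker T
  rw [LinearMap.range_eq_top.2 (Algebra.trace_surjective (ZMod 3) E), finrank_top,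
    Module.finrank_self] at h3
  have h4 : LinearMap.range L = LinearMap.ker T :=
    Submodule.eq_of_le_of_finrank_le hle (by omega)
  have := SetLike.ext_iff.1 h4 a
  rw [LinearMap.mem_range, LinearMap.mem_ker] at this
  simpa only [hL] using this

theorem card_trace_ne_zero (E : Type*) [Field E] [Fintype E] [Algebra (ZMod 3) E] [DecidableEq E] :
    3 * (Finset.univ.filter fun a : E => Algebra.trace (ZMod 3) E a ≠ 0).card
      = 2 * Fintype.card E := by
  have : Module.Finite (ZMod 3) E := Module.Finite.of_finite
  let T := Algebra.trace (ZMod 3) E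
  have h3 := LinearMap.finrank_range_add_finrank_ker T
  rw [LinearMap.range_eq_top.2 (Algebra.trace_surjective (ZMod 3) E), finrank_top,
    Module.finrank_self] at h3
  have hc := Module.natCard_eq_pow_finrank (K := ZMod 3) (V := E)
  have hk := Module.natCard_eq_pow_finrank (K := ZMod 3) (V := LinearMap.ker T)
  rw [← h3, pow_add, ← hk] at hc
  have hk2 : Nat.card (LinearMap.ker T)
      = (Finset.univ.filter fun a : E => Algebra.trace (ZMod 3) E a = 0).card := by
    classical
    rw [Nat.card_eq_fintype_card, Fintype.card_subtype]
    congr!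
  have hs := Finset.card_filter_add_card_filter_not (s := (Finset.univ : Finset E))
    (fun a : E => Algebra.trace (ZMod 3) E a = 0)
  rw [hk2, Nat.card_eq_fintype_card] at hc
  simp only [Nat.card_zmod, pow_one] at hc
  rw [Finset.card_univ] at hs
  simp only [ne_eq]
  omega

theorem ratTransform_eq_comp {F : Type*} [Field F] (f : F[X]) :
    ratTransform (X ^ 3 - X : F[X]) 1 f = f.comp (X ^ 3 - X) := by
  rw [ratTransform, comp, eval₂_eq_sum_range]
  simp

open IntermediateField in
theorem abs_trace_eq {F : Type*} [Field F] [Finite F] [Algebra (ZMod 3) F]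
    {E : Type*} [Field E] [Algebra F E] [Module.Finite F E] [Algebra (ZMod 3) E] (x : E) :
    Algebra.trace (ZMod 3) E x =
      - ((Module.finrank F E / (minpoly F x).natDegree : ℕ) : ZMod 3) *
        Algebra.trace (ZMod 3) F (minpoly F x).nextCoeff := by
  have : IsScalarTower (ZMod 3) F E := IsScalarTower.of_algebraMap_eq' (Subsingleton.elim _ _)
  have : Module.Finite (ZMod 3) F := Module.Finite.of_finite
  have hx : IsIntegral F x := .of_finite F x
  have h : Module.finrank F E / (minpoly F x).natDegree = Module.finrank F⟮x⟯ E := by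
    rw [← adjoin.finrank hx, ← Module.finrank_mul_finrank F F⟮x⟯ E]
    exact Nat.mul_div_cancel_left _ Module.finrank_pos
  rw [h, ← Algebra.trace_trace (S := F), trace_eq_finrank_mul_minpoly_nextCoeff F, ← nsmul_eq_mul,
    map_nsmul, map_neg, nsmul_eq_mul]
  ring

theorem artin_schreier_irreducible {F : Type*} [Field F] [Finite F] [Algebra (ZMod 3) F]
    (f : F[X]) (hf : Irreducible f) (h0 : Algebra.trace (ZMod 3) F f.nextCoeff ≠ 0)
    (A : Type*) [Field A] [Algebra F A] [Module.Finite F A] (y : A) (hy : minpoly F y = f)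
    (hfr : Module.finrank F A = f.natDegree) :
    Irreducible ((X ^ 3 - X : F[X]).map (algebraMap F A) - C y) := by
  have : Finite A := Module.finite_of_finite F
  let _ : Algebra (ZMod 3) A := ((algebraMap F A).comp (algebraMap (ZMod 3) F)).toAlgebra
  have ht : Algebra.trace (ZMod 3) A y ≠ 0 := by
    rw [abs_trace_eq (F := F), hy, hfr, Nat.div_self hf.natDegree_pos]
    simpa using h0
  have hr : ((X ^ 3 - X : F[X]).map (algebraMap F A) - C y) = X ^ 3 - X - C y := by simp
  rw [hr]
  refine irreducible_of_degree_le_three_of_not_isRoot ?_ fun b hb => ht ?_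
  · have : (X ^ 3 - X - C y : A[X]).natDegree = 3 := by compute_degree!
    simp [this]
  · rw [← h90_three]
    refine ⟨b, ?_⟩
    simpa [sub_eq_zero] using hb

theorem irreducible_iff_trace {F : Type*} [Field F] [Finite F] [Algebra (ZMod 3) F]
    (f : F[X]) (hm : f.Monic) (hf : Irreducible f) :
    Irreducible (f.comp (X ^ 3 - X)) ↔ Algebra.trace (ZMod 3) F f.nextCoeff ≠ 0 := by
  have hgm : (X ^ 3 - X : F[X]).Monic := by monicity!
  have hgd : (X ^ 3 - X : F[X]).natDegree = 3 := by compute_degree!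
  constructor
  · intro h h0
    have := Fact.mk hf
    let E := AdjoinRoot f
    have hfin : Module.Finite F E := hm.finite_adjoinRoot
    have : Finite E := Module.finite_of_finite F
    let _ : Algebra (ZMod 3) E := ((algebraMap F E).comp (algebraMap (ZMod 3) F)).toAlgebra
    have hmp : minpoly F (AdjoinRoot.root f) = f := by
      rw [AdjoinRoot.minpoly_root hf.ne_zero, hm.leadingCoeff]; simp
    have ht : Algebra.trace (ZMod 3) E (AdjoinRoot.root f) = 0 := by
      rw [abs_trace_eq (F := F), hmp, h0, mul_zero]
    obtain ⟨b, hb⟩ := (h90_three E _).2 ht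
    have hroot : aeval b (f.comp (X ^ 3 - X)) = 0 := by
      rw [aeval_comp]
      simp only [map_sub, map_pow, aeval_X, hb]
      rw [AdjoinRoot.aeval_eq, AdjoinRoot.mk_self]
    have hmb := minpoly.eq_of_irreducible_of_monic h hroot (hm.comp hgm (by simp [hgd]))
    have hle := minpoly.natDegree_le (A := F) b
    have hfr : Module.finrank F E = f.natDegree := (AdjoinRoot.powerBasis hf.ne_zero).finrank
    rw [← hmb, natDegree_comp, hgd, hfr] at hle
    have := hf.natDegree_pos
    omega
  · intro h0
    refine irreducible_comp hm hgm hf fun E _ _ x hx => ?_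
    have hintg : IsIntegral F x := by
      by_contra hc
      rw [minpoly.eq_zero hc] at hx
      exact hf.ne_zero hx.symm
    have : Module.Finite F (IntermediateField.adjoin F {x}) :=
      IntermediateField.adjoin.finiteDimensional hintg
    generalize hA : IntermediateField.AdjoinSimple.gen F x = y
    have hy : minpoly F y = f := by rw [← hA, IntermediateField.minpoly_gen, hx]
    have hfr : Module.finrank F (IntermediateField.adjoin F {x}) = f.natDegree := by
      rw [IntermediateField.adjoin.finrank hintg, hx]
    exact artin_schreier_irreducible f hf h0 _ y hy hfr

theorem card_degree_part {F : Type*} [Field F] [Finite F] [Algebra (ZMod 3) F]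
    (K : Type*) [Field K] [Fintype K] [Algebra F K] [Algebra (ZMod 3) K] (d : ℕ)
    (hd : d ∣ Module.finrank F K) :
    (Finset.univ.filter fun a : K =>
        Algebra.trace (ZMod 3) K a ≠ 0 ∧ (minpoly F a).natDegree = d).card =
      if 3 ∣ Module.finrank F K / d then 0
        else d * (IrredSet (X ^ 3 - X : F[X]) 1 d).ncard := by
  classical
  have hfin : Module.Finite F K := Module.Finite.of_finite
  have key : ∀ a : K, (minpoly F a).natDegree = d → (Algebra.trace (ZMod 3) K a ≠ 0 ↔
      ¬ 3 ∣ Module.finrank F K / d ∧ Irreducible ((minpoly F a).comp (X ^ 3 - X))) := by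
    intro a ha
    have hintg : IsIntegral F a := .of_finite F a
    rw [irreducible_iff_trace _ (minpoly.monic hintg) (minpoly.irreducible hintg),
      abs_trace_eq (F := F) a, ha, ne_eq, mul_eq_zero, neg_eq_zero, ZMod.natCast_eq_zero_iff]
    tauto
  split_ifs with h3
  · rw [Finset.card_eq_zero, Finset.filter_eq_empty_iff]
    rintro a - ⟨h1, h2⟩
    exact ((key a h2).1 h1).1 h3
  · set S := (Finset.univ.filter fun a : K =>
        Algebra.trace (ZMod 3) K a ≠ 0 ∧ (minpoly F a).natDegree = d) with hS
    have hroots : ∀ f : F[X], f.Monic → Irreducible f → f.natDegree = d →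
        (f.map (algebraMap F K)).Splits := by
      intro f hm hf hdeg
      have := Fact.mk hf
      have hfa : Module.Finite F (AdjoinRoot f) := hm.finite_adjoinRoot
      have hfr : Module.finrank F (AdjoinRoot f) = f.natDegree :=
        (AdjoinRoot.powerBasis hf.ne_zero).finrank
      obtain ⟨φ⟩ := FiniteField.nonempty_algHom_of_finrank_dvd (F := F) (K := AdjoinRoot f)
        (L := K) (by rw [hfr, hdeg]; exact hd)
      have hz : aeval (φ (AdjoinRoot.root f)) f = 0 := by
        rw [aeval_algHom_apply, AdjoinRoot.aeval_eq, AdjoinRoot.mk_self, map_zero]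
      rw [minpoly.eq_of_irreducible_of_monic hf hz hm]
      exact Normal.splits inferInstance _
    have hpos : ∀ f : F[X], Irreducible f → f.natDegree = d → d ≠ 0 := by
      intro f hf hdeg
      have := hf.natDegree_pos
      omega
    have him : (S.image (minpoly F) : Set F[X]) = IrredSet (X ^ 3 - X : F[X]) 1 d := by
      ext f
      simp only [Finset.coe_image, Set.mem_image, IrredSet, Set.mem_ofPred_eq,
        ratTransform_eq_comp]
      constructor
      · rintro ⟨a, ha, rfl⟩
        have hintg : IsIntegral F a := .of_finite F a
        have ha' : Algebra.trace (ZMod 3) K a ≠ 0 ∧ (minpoly F a).natDegree = d := by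
          simpa [hS] using ha
        exact ⟨minpoly.monic hintg, minpoly.irreducible hintg, ha'.2, ((key a ha'.2).1 ha'.1).2⟩
      · rintro ⟨hm, hf, hdeg, hirr⟩
        obtain ⟨a, ha⟩ := (hroots f hm hf hdeg).exists_eval_eq_zero (by
          rw [degree_map]; exact (degree_pos_of_irreducible hf).ne')
        have hmin : f = minpoly F a := minpoly.eq_of_irreducible_of_monic hf
          (by rwa [eval_map_algebraMap] at ha) hm
        subst hmin
        refine ⟨a, ?_, rfl⟩
        simp only [hS, Finset.coe_filter, Set.mem_ofPred_eq, Finset.mem_univ, true_and]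
        exact ⟨(key a hdeg).2 ⟨h3, hirr⟩, hdeg⟩
    rw [← him, Set.ncard_coe_finset, mul_comm]
    rw [Finset.card_eq_sum_card_image (minpoly F) S, Finset.sum_const_nat]
    intro f hf
    have hf' : f ∈ IrredSet (X ^ 3 - X : F[X]) 1 d := him ▸ Finset.mem_coe.2 hf
    simp only [IrredSet, Set.mem_ofPred_eq, ratTransform_eq_comp] at hf'
    obtain ⟨hm, hirr, hdeg, hc⟩ := hf'
    have hcard := card_rootSet_eq_natDegree (K := K)
      (PerfectField.separable_of_irreducible hirr) (hroots f hm hirr hdeg)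
    rw [← hdeg, ← hcard, ← Set.toFinset_card]
    congr 1
    ext a
    simp only [Set.mem_toFinset, mem_rootSet, Finset.mem_filter, hS, Finset.mem_univ, true_and]
    constructor
    · rintro ⟨-, rfl⟩
      exact ⟨hirr.ne_zero, minpoly.aeval F a⟩
    · rintro ⟨-, ha⟩
      have hmin : f = minpoly F a := minpoly.eq_of_irreducible_of_monic hirr ha hm
      subst hmin
      exact ⟨⟨(key a hdeg).2 ⟨h3, hc⟩, hdeg⟩, rfl⟩

theorem sum_irredSet {F : Type*} [Field F] [Finite F] [Algebra (ZMod 3) F] (N : ℕ) (hN : 0 < N) :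
    3 * ∑ d ∈ N.divisors, (if 3 ∣ N / d then 0
        else d * (IrredSet (X ^ 3 - X : F[X]) 1 d).ncard) = 2 * Nat.card F ^ N := by
  classical
  have : CharP F 3 := charP_of_injective_algebraMap (algebraMap (ZMod 3) F).injective 3
  have : NeZero N := ⟨hN.ne'⟩
  let K := FiniteField.Extension F 3 N
  have hfr : Module.finrank F K = N := FiniteField.finrank_extension F 3 N
  have hfin : Module.Finite F K := inferInstance
  have : Finite K := Module.finite_of_finite F
  have : Fintype K := Fintype.ofFinite K
  let _ : Algebra (ZMod 3) K := ((algebraMap F K).comp (algebraMap (ZMod 3) F)).toAlgebra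
  have hcard : Fintype.card K = Nat.card F ^ N := by
    rw [← Nat.card_eq_fintype_card]; exact FiniteField.natCard_extension F 3 N
  rw [← hcard, ← card_trace_ne_zero K]
  congr 1
  rw [Finset.card_eq_sum_card_fiberwise (f := fun a : K => (minpoly F a).natDegree)
    (t := N.divisors)]
  · refine Finset.sum_congr rfl fun d hd => ?_
    have h := card_degree_part (F := F) K d (by rw [hfr]; exact Nat.dvd_of_mem_divisors hd)
    rw [hfr] at h
    rw [← h, Finset.filter_filter]
  · intro a _
    rw [Finset.mem_coe, Nat.mem_divisors]
    refine ⟨?_, hN.ne'⟩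
    exact (minpoly.degree_dvd (K := F) (.of_finite F a)).trans hfr.dvd

theorem sum_reindex (G : ℕ → ℕ) (k m : ℕ) (hm : 0 < m) (h3 : ¬ 3 ∣ m) :
    ∑ d ∈ (3 ^ k * m).divisors, (if 3 ∣ 3 ^ k * m / d then 0 else G d) =
      ∑ e ∈ m.divisors, G (3 ^ k * e) := by
  have hk : 0 < 3 ^ k := by positivity
  have : ∀ d, (if 3 ∣ 3 ^ k * m / d then 0 else G d) =
      if ¬ 3 ∣ 3 ^ k * m / d then G d else 0 := fun d => by split_ifs <;> rfl
  simp only [this]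
  rw [← Finset.sum_filter]
  symm
  refine Finset.sum_nbij' (fun e => 3 ^ k * e) (fun d => d / 3 ^ k) ?_ ?_ ?_ ?_ ?_
  · intro e he
    rw [Nat.mem_divisors] at he
    rw [Finset.mem_filter, Nat.mem_divisors]
    refine ⟨⟨Nat.mul_dvd_mul_left _ he.1, by positivity⟩, ?_⟩
    rw [Nat.mul_div_mul_left _ _ hk]
    exact fun h => h3 (h.trans (Nat.div_dvd_of_dvd he.1))
  · intro d hd
    rw [Finset.mem_filter, Nat.mem_divisors] at hd
    obtain ⟨⟨⟨c, hc⟩, -⟩, hd2⟩ := hd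
    have hd0 : 0 < d := by
      rcases Nat.eq_zero_or_pos d with rfl | h
      · have : 0 < 3 ^ k * m := by positivity
        omega
      · exact h
    rw [hc, Nat.mul_div_cancel_left _ hd0] at hd2
    have hcop : Nat.Coprime (3 ^ k) c :=
      Nat.Coprime.pow_left _ ((Nat.Prime.coprime_iff_not_dvd Nat.prime_three).2 hd2)
    obtain ⟨e, rfl⟩ := hcop.dvd_of_dvd_mul_right (hc ▸ Nat.dvd_mul_right _ m)
    rw [Nat.mul_div_cancel_left _ hk, Nat.mem_divisors]
    refine ⟨⟨c, Nat.eq_of_mul_eq_mul_left hk (by rw [hc, mul_assoc])⟩, hm.ne'⟩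
  · intro e _
    exact Nat.mul_div_cancel_left _ hk
  · intro d hd
    rw [Finset.mem_filter, Nat.mem_divisors] at hd
    obtain ⟨⟨⟨c, hc⟩, -⟩, hd2⟩ := hd
    have hd0 : 0 < d := by
      rcases Nat.eq_zero_or_pos d with rfl | h
      · have : 0 < 3 ^ k * m := by positivity
        omega
      · exact h
    rw [hc, Nat.mul_div_cancel_left _ hd0] at hd2
    have hcop : Nat.Coprime (3 ^ k) c :=
      Nat.Coprime.pow_left _ ((Nat.Prime.coprime_iff_not_dvd Nat.prime_three).2 hd2)
    exact Nat.mul_div_cancel' (hcop.dvd_of_dvd_mul_right (hc ▸ Nat.dvd_mul_right _ m))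
  · intro e _
    rfl

/-- Theorem 13: over `F_q` of characteristic three,
`|𝓘(x³−x, 1, n, q)| = (2/(3n₃)) I(n/n₃, q^{n₃})`. -/
theorem stmt13 {F : Type*} [Field F] [Fintype F] (q : ℕ) (hq : Fintype.card F = q)
    (hchar : ringChar F = 3) (n : ℕ) (hn : 1 < n) :
    ((IrredSet (X ^ 3 - X : F[X]) 1 n).ncard : ℚ) =
      (2 / (3 * (nThree n : ℚ))) * Ifun (n / nThree n) ((q : ℚ) ^ nThree n) := by
  classical
  have : CharP F 3 := hchar ▸ ringChar.charP F
  let _ : Algebra (ZMod 3) F := ZMod.algebra F 3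
  have hn0 : n ≠ 0 := by omega
  set k := n.factorization 3 with hk
  have h3n : nThree n = 3 ^ k := rfl
  have hdvd : 3 ^ k ∣ n := Nat.ordProj_dvd n 3
  obtain ⟨m, hm⟩ := hdvd
  have hk0 : 0 < 3 ^ k := by positivity
  have hdiv : n / 3 ^ k = m := by rw [hm, Nat.mul_div_cancel_left _ hk0]
  have h3m : ¬ 3 ∣ m := by
    rw [← hdiv]; exact Nat.not_dvd_ordCompl Nat.prime_three hn0
  have hm0 : 0 < m := by
    rcases Nat.eq_zero_or_pos m with h | h
    · simp [h] at h3m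
    · exact h
  let c : ℕ → ℕ := fun d => d * (IrredSet (X ^ 3 - X : F[X]) 1 d).ncard
  have hinv := (ArithmeticFunction.sum_eq_iff_sum_mul_moebius_eq_on (R := ℚ)
    (f := fun e => (c (3 ^ k * e) : ℚ)) (g := fun e => 2 / 3 * ((q : ℚ) ^ 3 ^ k) ^ e)
    {e | ¬ 3 ∣ e} (fun a b hab hb h => hb (h.trans hab))).1 (by
      intro e he h3
      have h1 := sum_irredSet (F := F) (3 ^ k * e) (by positivity)
      rw [sum_reindex c k e he h3, Nat.card_eq_fintype_card, hq] at h1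
      have h2 : (3 : ℚ) * ∑ i ∈ e.divisors, (c (3 ^ k * i) : ℚ) = 2 * (q : ℚ) ^ (3 ^ k * e) := by
        exact_mod_cast h1
      rw [pow_mul] at h2
      linarith) m hm0 h3m
  rw [Nat.sum_divisorsAntidiagonal
    (fun a b => ((ArithmeticFunction.moebius a : ℤ) : ℚ) * (2 / 3 * ((q : ℚ) ^ 3 ^ k) ^ b))] at hinv
  have hsum : 2 / 3 * ∑ d ∈ m.divisors,
      ((ArithmeticFunction.moebius d : ℤ) : ℚ) * ((q : ℚ) ^ 3 ^ k) ^ (m / d) = (c n : ℚ) := by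
    rw [hm, ← hinv, Finset.mul_sum]
    exact Finset.sum_congr rfl fun d _ => by ring
  have hcn : (c n : ℚ) = (3 ^ k : ℚ) * m * ((IrredSet (X ^ 3 - X : F[X]) 1 n).ncard : ℚ) := by
    simp only [c]
    rw [Nat.cast_mul]
    congr 1
    exact_mod_cast hm
  rw [h3n, hdiv, Ifun]
  rw [hcn] at hsum
  have hmq : (m : ℚ) ≠ 0 := by exact_mod_cast hm0.ne'
  have hkq : (3 ^ k : ℚ) ≠ 0 := by positivity
  generalize (∑ d ∈ m.divisors,
      ((ArithmeticFunction.moebius d : ℤ) : ℚ) * ((q : ℚ) ^ 3 ^ k) ^ (m / d)) = S at *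
  push_cast
  field_simp
  linarith
end
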